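/- arXiv:2003.08614 — 10 statements merged into one kernel-verified Lean document; each statement's English description precedes it below -/
import Mathlib

section
/- For all integers k ≥ 1 and n ≥ 1, every real λ with 0 ≤ λ ≤ 1, and any two probability vectors p = (p_1, …, p_k) and q = (q_1, …, q_k), one has G_{k,n}(λ, p) = G_{k,n}(λ, q); that is, G_{k,n}(λ, p) does not depend on the probability vector p. -/
/-!
Write `a = λ/n` and `bᵢ = (1-λ)pᵢ`. Dividing by `n!`, the sum `G_{k,n}(λ, p)` becomes the `n`-th
coefficient of `∏ᵢ E(bᵢ)`, where `E(b) = ∑_j (aj + b)^j / j! · z^j`. It suffices that this product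
depends only on `∑ᵢ bᵢ = 1 - λ`, and this follows from the two-factor identity
`E(b) E(c) = E(b + c) E(0)` (`abelSeries_mul`).

The two-factor identity is proved coefficientwise. Since `d/db (a(j+1) + b)^(j+1) / (j+1)!` equals
`(aj + (b + a))^j / j!`, differentiating the `(n+1)`-st coefficient of `E(b + t) E(c - t)` in `t`
gives the difference of the `n`-th coefficients of `E(b + t + a) E(c - t)` and
`E(b + t) E(c - t + a)`. Both have the same parameter sum, so the difference vanishes by induction.
-/

open Finset

/-- The polynomial `G_{k,n}(λ) = ∑_{m=0}^n (n!/(n^m (n-m)!)) C(m+k-2, k-2) λ^m`. -/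
noncomputable def Gpoly (k n : ℕ) (l : ℝ) : ℝ :=
  ∑ m ∈ Finset.range (n + 1),
    (Nat.factorial n : ℝ) / ((n : ℝ) ^ m * (Nat.factorial (n - m) : ℝ)) *
      (Nat.choose (m + k - 2) (k - 2) : ℝ) * l ^ m
/-- `G_{k,n}(λ, p)`: sum over tuples of nonnegative integers summing to `n` of the
multinomial coefficient times `∏ i (λ Xᵢ/n + (1-λ) pᵢ)^{Xᵢ}` (with `0^0 = 1`). -/
noncomputable def Gfun (k n : ℕ) (l : ℝ) (p : Fin k → ℝ) : ℝ :=
  ∑ X ∈ Finset.Nat.antidiagonalTuple k n,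
    (Nat.multinomial Finset.univ X : ℝ) *
      ∏ i, (l * (X i : ℝ) / (n : ℝ) + (1 - l) * p i) ^ (X i)

/-- The Abel term `(a j + b)^j / j!`. -/
noncomputable def abelTerm (a b : ℝ) (j : ℕ) : ℝ :=
  (a * j + b) ^ j / (j.factorial : ℝ)

/-- The exponential generating function `∑_j (a j + b)^j / j! · z^j`. -/
noncomputable def abelSeries (a b : ℝ) : PowerSeries ℝ :=
  PowerSeries.mk (abelTerm a b)

lemma abelTerm_zero (a b : ℝ) : abelTerm a b 0 = 1 := by
  simp [abelTerm]

lemma hasDerivAt_abelTerm_succ (a b : ℝ) (j : ℕ) :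
    HasDerivAt (fun b => abelTerm a b (j + 1)) (abelTerm a (b + a) j) b := by
  have h := (((hasDerivAt_id b).const_add (a * ((j + 1 : ℕ) : ℝ))).pow (j + 1)).div_const
    ((j + 1).factorial : ℝ)
  refine h.congr_deriv ?_
  have hj : (j.factorial : ℝ) ≠ 0 := by positivity
  have hj1 : ((j : ℝ) + 1) ≠ 0 := by positivity
  simp only [abelTerm, Nat.factorial_succ, id, Nat.add_sub_cancel]
  push_cast
  field_simp
  ring

/-- The `n`-th coefficient of `E(b) E(c)` depends only on `b + c`. -/
lemma abelTerm_conv (a : ℝ) (n : ℕ) : ∀ b c b' c' : ℝ, b + c = b' + c' →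
    ∑ x ∈ antidiagonal n, abelTerm a b x.1 * abelTerm a c x.2 =
      ∑ x ∈ antidiagonal n, abelTerm a b' x.1 * abelTerm a c' x.2 := by
  induction n with
  | zero => intro b c b' c' _; simp [abelTerm_zero]
  | succ n ih =>
    intro b c b' c' h
    let F : ℝ → ℝ := fun t =>
      ∑ x ∈ antidiagonal (n + 1), abelTerm a (b + t) x.1 * abelTerm a (c - t) x.2
    have hterm1 : ∀ j t, HasDerivAt (fun t => abelTerm a (b + t) (j + 1))
        (abelTerm a (b + t + a) j) t := fun j t =>
      ((hasDerivAt_abelTerm_succ a (b + t) j).comp t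
        ((hasDerivAt_id t).const_add b)).congr_deriv (by simp)
    have hterm2 : ∀ j t, HasDerivAt (fun t => abelTerm a (c - t) (j + 1))
        (-abelTerm a (c - t + a) j) t := fun j t =>
      ((hasDerivAt_abelTerm_succ a (c - t) j).comp t
        ((hasDerivAt_id t).const_sub c)).congr_deriv (by simp)
    -- Derivatives in `t` of the two factors, including index `0`, where the term is constant.
    let D1 : ℝ → ℕ → ℝ := fun t j => Nat.casesOn j 0 fun j => abelTerm a (b + t + a) j
    let D2 : ℝ → ℕ → ℝ := fun t j => Nat.casesOn j 0 fun j => -abelTerm a (c - t + a) j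
    have hD1 : ∀ j t, HasDerivAt (fun t => abelTerm a (b + t) j) (D1 t j) t := by
      rintro (_ | j) t
      · simpa [abelTerm_zero, D1] using hasDerivAt_const t (1 : ℝ)
      · exact hterm1 j t
    have hD2 : ∀ j t, HasDerivAt (fun t => abelTerm a (c - t) j) (D2 t j) t := by
      rintro (_ | j) t
      · simpa [abelTerm_zero, D2] using hasDerivAt_const t (1 : ℝ)
      · exact hterm2 j t
    have hF : ∀ t, HasDerivAt F 0 t := by
      intro t
      have hs := HasDerivAt.fun_sum (u := antidiagonal (n + 1)) (x := t)
        (fun x _ => (hD1 x.1 t).mul (hD2 x.2 t))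
      refine hs.congr_deriv ?_
      rw [sum_add_distrib, Finset.Nat.sum_antidiagonal_succ, Finset.Nat.sum_antidiagonal_succ']
      have := ih (b + t + a) (c - t) (b + t) (c - t + a) (by ring)
      have h1 : D1 t 0 = 0 := rfl
      have h2 : D2 t 0 = 0 := rfl
      rw [h1, h2]
      simp only [D1, D2, mul_neg, sum_neg_distrib, this]
      ring
    have hconst := is_const_of_deriv_eq_zero (fun t => (hF t).differentiableAt)
      (fun t => (hF t).deriv) 0 (b' - b)
    have hc : c - (b' - b) = c' := by linarith
    simpa [F, hc] using hconst

lemma abelSeries_mul (a b c : ℝ) :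
    abelSeries a b * abelSeries a c = abelSeries a (b + c) * abelSeries a 0 := by
  ext n
  simp only [abelSeries, PowerSeries.coeff_mul, PowerSeries.coeff_mk]
  exact abelTerm_conv a n _ _ _ _ (by ring)

/-- The extra factor `E(0)` makes the identity uniform in the number of factors. -/
lemma prod_abelSeries_mul {ι : Type*} (a : ℝ) (b : ι → ℝ) (s : Finset ι) :
    (∏ i ∈ s, abelSeries a (b i)) * abelSeries a 0 =
      abelSeries a 0 ^ #s * abelSeries a (∑ i ∈ s, b i) := by
  classical
  induction s using Finset.induction_on with
  | empty => simp
  | insert i s hi ih =>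
    rw [prod_insert hi, sum_insert hi, card_insert_of_notMem hi, mul_assoc, ih, mul_left_comm,
      abelSeries_mul, pow_succ]
    ring

lemma abelSeries_ne_zero (a b : ℝ) : abelSeries a b ≠ 0 := by
  intro h
  have := congrArg (PowerSeries.coeff 0) h
  simp [abelSeries, abelTerm_zero] at this

lemma coeff_prod_abelSeries (k n : ℕ) (a : ℝ) (b : Fin k → ℝ) :
    PowerSeries.coeff n (∏ i, abelSeries a (b i)) =
      ∑ X ∈ Finset.Nat.antidiagonalTuple k n, ∏ i, abelTerm a (b i) (X i) := by
  rw [PowerSeries.coeff_prod]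
  refine Finset.sum_nbij' (fun f => ⇑f) (fun X => Finsupp.equivFunOnFinite.symm X) ?_ ?_ ?_ ?_ ?_
  · intro f hf
    simpa [Finset.Nat.mem_antidiagonalTuple] using hf
  · intro X hX
    simpa [Finset.Nat.mem_antidiagonalTuple] using hX
  · intro f _
    ext; simp
  · intro X _
    simp
  · intro f _
    simp [abelSeries]

lemma Gfun_eq_coeff (k n : ℕ) (l : ℝ) (p : Fin k → ℝ) :
    Gfun k n l p = (n.factorial : ℝ) *
      PowerSeries.coeff n (∏ i, abelSeries (l / n) ((1 - l) * p i)) := by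
  rw [coeff_prod_abelSeries, Gfun, mul_sum]
  refine sum_congr rfl fun X hX => ?_
  have hs : ∑ i, X i = n := Finset.Nat.mem_antidiagonalTuple.1 hX
  have hm : (∏ i, ((X i).factorial : ℝ)) * (Nat.multinomial univ X : ℝ) = n.factorial := by
    have := Nat.multinomial_spec univ X
    rw [hs] at this
    exact_mod_cast this
  have hne : (∏ i, ((X i).factorial : ℝ)) ≠ 0 :=
    prod_ne_zero_iff.2 fun i _ => by positivity
  simp only [abelTerm, prod_div_distrib, ← hm]
  have he : ∀ i, l * (X i : ℝ) / n = l / n * X i := fun i => by ring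
  simp only [he]
  field_simp

theorem Gfun_independent_of_p (k n : ℕ) (hk : 1 ≤ k) (hn : 1 ≤ n)
    (l : ℝ) (hl0 : 0 ≤ l) (hl1 : l ≤ 1)
    (p q : Fin k → ℝ)
    (hp : ∀ i, 0 ≤ p i) (hps : ∑ i, p i = 1)
    (hq : ∀ i, 0 ≤ q i) (hqs : ∑ i, q i = 1) :
    Gfun k n l p = Gfun k n l q := by
  rw [Gfun_eq_coeff, Gfun_eq_coeff]
  congr 2
  apply mul_right_cancel₀ (abelSeries_ne_zero (l / n) 0)
  rw [prod_abelSeries_mul, prod_abelSeries_mul, ← mul_sum, ← mul_sum, hps, hqs]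
end

section
/- For all integers k ≥ 2 and n ≥ 1, every real λ with 0 ≤ λ ≤ 1, and every probability vector p with all p_i > 0, the moment generating function satisfies φ_{k,n}(λ, p) ≤ G_{k,n}(λ, p). -/
/-!
The inequality holds term by term. Writing `q = X i / n`, the factor of index `i` in
`P(X) exp(λ n D(p̂‖p))` is `(p i * (q / p i) ^ λ) ^ X i = (q ^ λ * (p i) ^ (1 - λ)) ^ X i`, which
by the weighted AM-GM inequality is at most `(λ q + (1 - λ) p i) ^ X i`, the corresponding factor
in `Gfun` (`factor_le`). Taking the product over `i` and summing over `X` gives the result.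
-/

open Finset

/-- Multinomial probability of the tuple of counts `X` under probability vector `p`. -/
noncomputable def multP (k : ℕ) (p : Fin k → ℝ) (X : Fin k → ℕ) : ℝ :=
  (Nat.multinomial Finset.univ X : ℝ) * ∏ i, p i ^ (X i)

/-- Relative entropy `D(p̂ ‖ p)` of the empirical distribution `X/n` w.r.t. `p`
(with the convention `0 · log 0 = 0`, automatic since `Real.log 0 = 0`). -/
noncomputable def relEnt (k n : ℕ) (p : Fin k → ℝ) (X : Fin k → ℕ) : ℝ :=
  ∑ i, ((X i : ℝ) / (n : ℝ)) * Real.log ((X i : ℝ) / ((n : ℝ) * p i))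

/-- Moment generating function `φ_{k,n}(λ, p) = E exp(λ n D(p̂‖p))`. -/
noncomputable def phi (k n : ℕ) (l : ℝ) (p : Fin k → ℝ) : ℝ :=
  ∑ X ∈ Finset.Nat.antidiagonalTuple k n,
    multP k p X * Real.exp (l * (n : ℝ) * relEnt k n p X)

open scoped Classical in
/-- Tail probability `P(n D(p̂‖p) > t)`. -/
noncomputable def tailP (k n : ℕ) (p : Fin k → ℝ) (t : ℝ) : ℝ :=
  ∑ X ∈ (Finset.Nat.antidiagonalTuple k n).filter
      (fun X => t < (n : ℝ) * relEnt k n p X),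
    multP k p X

/-- Weighted AM-GM for a single coordinate: the contribution of one coordinate with count `x`. -/
lemma factor_le (n x : ℕ) (hn : 1 ≤ n) (l : ℝ) (hl0 : 0 ≤ l) (hl1 : l ≤ 1) (a : ℝ) (ha : 0 < a) :
    a ^ x * Real.exp (l * (n : ℝ) * ((x : ℝ) / n * Real.log ((x : ℝ) / (n * a)))) ≤
      (l * (x : ℝ) / n + (1 - l) * a) ^ x := by
  -- For `x = 0` both sides are `1`, and the logarithm takes its junk value.
  rcases Nat.eq_zero_or_pos x with rfl | hx
  · simp
  have hn' : (0 : ℝ) < n := by exact_mod_cast hn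
  have hx' : (0 : ℝ) < x := by exact_mod_cast hx
  set r : ℝ := (x : ℝ) / (n * a) with hr
  have hr0 : 0 < r := by positivity
  have hexp : l * (n : ℝ) * ((x : ℝ) / n * Real.log r) = x * (Real.log r * l) := by
    field_simp
  rw [hexp, Real.exp_nat_mul, ← Real.rpow_def_of_pos hr0, ← mul_pow]
  have hamgm : r ^ l ≤ l * r + (1 - l) := by
    simpa using Real.geom_mean_le_arith_mean2_weighted hl0 (sub_nonneg.2 hl1) hr0.le
      zero_le_one (add_sub_cancel l 1)
  have hscale : l * (x : ℝ) / n + (1 - l) * a = a * (l * r + (1 - l)) := by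
    rw [hr]
    field_simp
  rw [hscale]
  gcongr

theorem mgf_le_Gfun (k n : ℕ) (hk : 2 ≤ k) (hn : 1 ≤ n)
    (l : ℝ) (hl0 : 0 ≤ l) (hl1 : l ≤ 1)
    (p : Fin k → ℝ) (hp : ∀ i, 0 < p i) (hps : ∑ i, p i = 1) :
    phi k n l p ≤ Gfun k n l p := by
  unfold phi Gfun
  refine Finset.sum_le_sum fun X _ => ?_
  rw [multP, relEnt, mul_assoc, Finset.mul_sum, Real.exp_sum, ← Finset.prod_mul_distrib]
  have hfac : ∀ i ∈ (Finset.univ : Finset (Fin k)), 0 ≤ p i ^ X i *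
      Real.exp (l * (n : ℝ) * ((X i : ℝ) / n * Real.log ((X i : ℝ) / (n * p i)))) := fun i _ =>
    mul_nonneg (pow_nonneg (hp i).le _) (Real.exp_nonneg _)
  exact mul_le_mul_of_nonneg_left
    (Finset.prod_le_prod hfac fun i _ => factor_le n (X i) hn l hl0 hl1 (p i) (hp i))
    (Nat.cast_nonneg _)
end

section
/- For all integers k ≥ 2 and n ≥ 1 and every real λ, the recurrence G_{k,n}(λ) = G_{k−1,n}(λ) + λ · G_{k,n−1}((n−1)λ/n) holds, where G_{1,n}(λ) := 1 for all n ≥ 0. -/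
/-!
The recurrence is Pascal's rule read off coefficientwise. Split off the constant term `1` of
`G_{k,n}` (`Gpoly_succ`). The substitution `λ ↦ (n-1)λ/n` replaces the powers of `n - 1` in the
denominators of `G_{k,n-1}` by powers of `n`, so that `λ · G_{k,n-1}((n-1)λ/n)` has at `λ^(m+1)`
the same factor `n!/(n^(m+1) (n-m-1)!)` as `G_{k,n}` and `G_{k-1,n}` (`mul_Gpoly_scaled`). It
remains to use `C(m+1+j, j) = C(m+j, j-1) + C(m+j, j)` with `j = k - 2`, where for `j = 0` the
middle term is absent, matching `G_{1,n} = 1`.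
-/

open Finset

/-- `G_{1,n}(λ) := 1`; otherwise the polynomial `G_{k,n}`. -/
noncomputable def GpolyE (k n : ℕ) (l : ℝ) : ℝ :=
  if k = 1 then 1 else Gpoly k n l

/-- `G_{j+2,N+1}` with its constant term split off. -/
lemma Gpoly_succ (j N : ℕ) (l : ℝ) :
    Gpoly (j + 2) (N + 1) l = 1 + ∑ m ∈ Finset.range (N + 1),
      (Nat.factorial (N + 1) : ℝ) / (((N : ℝ) + 1) ^ (m + 1) * (Nat.factorial (N - m) : ℝ)) *
        (Nat.choose (m + 1 + j) j : ℝ) * l ^ (m + 1) := by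
  unfold Gpoly
  rw [Finset.sum_range_succ', add_comm]
  have h : (Nat.factorial (N + 1) : ℝ) ≠ 0 := by positivity
  congr 1
  · simp [h]
  · refine Finset.sum_congr rfl fun m _ => ?_
    have e1 : N + 1 - (m + 1) = N - m := by omega
    have e2 : m + 1 + (j + 2) - 2 = m + 1 + j := by omega
    rw [e1, e2, Nat.add_sub_cancel]
    push_cast
    rfl

lemma mul_Gpoly_scaled (j N : ℕ) (l : ℝ) :
    l * Gpoly (j + 2) N ((N : ℝ) * l / ((N : ℝ) + 1)) = ∑ m ∈ Finset.range (N + 1),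
      (Nat.factorial (N + 1) : ℝ) / (((N : ℝ) + 1) ^ (m + 1) * (Nat.factorial (N - m) : ℝ)) *
        (Nat.choose (m + j) j : ℝ) * l ^ (m + 1) := by
  unfold Gpoly
  rw [Finset.mul_sum]
  refine Finset.sum_congr rfl fun m hm => ?_
  have e2 : m + (j + 2) - 2 = m + j := by omega
  rw [e2, Nat.add_sub_cancel]
  -- For `N = 0` only `m = 0` occurs, so the power of `N` being cancelled is never zero.
  have hN : (N : ℝ) ^ m ≠ 0 := by
    rcases Nat.eq_zero_or_pos N with rfl | h
    · have : m = 0 := by simpa using hm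
      simp [this]
    · positivity
  have hN1 : (N : ℝ) + 1 ≠ 0 := by positivity
  have hf : (Nat.factorial (N - m) : ℝ) ≠ 0 := by positivity
  rw [div_pow, mul_pow, Nat.factorial_succ]
  push_cast
  generalize (N : ℝ) ^ m = x at *
  field_simp
  ring

theorem Gpoly_recurrence (k n : ℕ) (hk : 2 ≤ k) (hn : 1 ≤ n) (l : ℝ) :
    Gpoly k n l = GpolyE (k - 1) n l + l * Gpoly k (n - 1) (((n : ℝ) - 1) * l / (n : ℝ)) := by
  obtain ⟨j, rfl⟩ := Nat.exists_eq_add_of_le' hk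
  obtain ⟨N, rfl⟩ := Nat.exists_eq_add_of_le' hn
  have e : ((N + 1 : ℕ) : ℝ) = (N : ℝ) + 1 := by push_cast; rfl
  rw [Nat.add_sub_cancel, e, add_sub_cancel_right, mul_Gpoly_scaled, Gpoly_succ]
  rcases j with _ | i
  · simp [GpolyE]
  · have e3 : GpolyE (i + 1 + 2 - 1) (N + 1) l = Gpoly (i + 2) (N + 1) l := by
      simp [GpolyE]
    rw [e3, Gpoly_succ, add_assoc, ← Finset.sum_add_distrib]
    congr 1
    refine Finset.sum_congr rfl fun m _ => ?_
    have e4 : Nat.choose (m + 1 + (i + 1)) (i + 1)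
        = Nat.choose (m + 1 + i) i + Nat.choose (m + (i + 1)) (i + 1) := by
      rw [← add_assoc, Nat.choose_succ_succ, show m + (i + 1) = m + 1 + i by omega]
    rw [e4]
    push_cast
    ring
end

section
/- For all integers k ≥ 2 and n ≥ 1, every real λ with 0 ≤ λ ≤ 1, and every probability vector p = (p_1, …, p_k), the sum G_{k,n}(λ, p) equals the polynomial ∑_{m=0}^{n} (n! / (n^m (n−m)!)) · binom(m+k−2, k−2) · λ^m. -/
/-!
Put `c = λ / n` and `aᵢ = (1 - λ) pᵢ`. Since the multinomial coefficient is `n! / ∏ Xᵢ!`, the sum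
`G_{k,n}(λ, p)` is `n!` times the `k`-fold convolution of the sequences `(aᵢ + c x)^x / x!`.
The key fact (`sum_tuple_eq_coeff`) is that this convolution equals
`[T^n] exp((∑ aᵢ + c n) T) (1 - c T)^{-(k-1)}`. As `∑ aᵢ + c n = 1`, expanding the right-hand side
gives the polynomial.

The key fact follows by induction on `k` from an Abel-type identity (`abel_conv`). By linearity
in the power series involved it reduces to the two-term case (`abel_core`)
`∑_{i+u=N} (b + c i)^i / i! * (a + c u)^u / u! = [T^N] exp((a + b + c N) T) (1 - c T)^{-1}`.
With `s = a + b + c N` the second base is `s - (b + c i)`; expanding its power in `s`, the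
coefficient of `s^p / p!` is an `M`-th finite difference of `x ↦ (b + c x)^M` divided by `M!`,
where `M = N - p`, and hence equals `c^M` (`sum_fwdDiff`).
-/

open Finset

namespace AbelSum

open PowerSeries

/-- The power series `exp(s T)`. -/
noncomputable def E (s : ℝ) : PowerSeries ℝ := rescale s (PowerSeries.exp ℝ)

/-- The geometric series `(1 - c T)⁻¹ = ∑ c^m T^m`. -/
noncomputable def U (c : ℝ) : PowerSeries ℝ := rescale c (PowerSeries.mk 1)

lemma coeff_E (s : ℝ) (n : ℕ) : coeff n (E s) = s ^ n / (n.factorial : ℝ) := by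
  simp [E, coeff_rescale, coeff_exp, div_eq_mul_inv]

lemma coeff_U (c : ℝ) (n : ℕ) : coeff n (U c) = c ^ n := by
  simp [U, coeff_rescale]

lemma E_mul_E (s t : ℝ) : E s * E t = E (s + t) :=
  exp_mul_exp_eq_exp_add s t

lemma coeff_U_pow (c : ℝ) (r n : ℕ) :
    coeff n (U c ^ (r + 1)) = (Nat.choose (r + n) r : ℝ) * c ^ n := by
  have h : (PowerSeries.mk 1 : PowerSeries ℝ) ^ (r + 1)
      = PowerSeries.mk fun n => (Nat.choose (r + n) r : ℝ) :=
    mk_one_pow_eq_mk_choose_add ℝ r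
  rw [U, ← map_pow, h, coeff_rescale, coeff_mk, mul_comm]

lemma sum_antidiagonal_assoc (n : ℕ) (F : ℕ → ℕ → ℕ → ℝ) :
    ∑ x ∈ antidiagonal n, ∑ y ∈ antidiagonal x.2, F x.1 y.1 y.2
      = ∑ x ∈ antidiagonal n, ∑ y ∈ antidiagonal x.1, F y.1 y.2 x.2 := by
  simp only [Finset.sum_sigma']
  apply Finset.sum_nbij' (fun ⟨⟨i, _j⟩, ⟨k, l⟩⟩ ↦ ⟨(i + k, l), (i, k)⟩)
    (fun ⟨⟨_i, j⟩, ⟨k, l⟩⟩ ↦ ⟨(k, l + j), (l, j)⟩) <;> simp <;> grind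

/-- The `M`-th finite difference of `x ↦ (b + c x)^M`, divided by `M!`. -/
lemma sum_fwdDiff (b c : ℝ) (M : ℕ) :
    ∑ x ∈ antidiagonal M, coeff x.1 (E (b + c * x.1)) * coeff x.2 (E (-(b + c * x.1)))
      = c ^ M := by
  rcases eq_or_ne c 0 with rfl | hc
  · have h := congrArg (coeff M) (E_mul_E b (-b))
    rw [coeff_mul, add_neg_cancel, coeff_E] at h
    simp only [zero_mul, add_zero]
    rw [h]
    rcases Nat.eq_zero_or_pos M with rfl | hM
    · simp
    · simp [hM.ne']
  · have h := congrFun (fwdDiff_iter_eq_factorial (R := ℝ) (n := M)) (b / c)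
    rw [fwdDiff_iter_eq_sum_shift] at h
    have hM : (M.factorial : ℝ) ≠ 0 := by positivity
    rw [Nat.sum_antidiagonal_eq_sum_range_succ_mk]
    simp only [Pi.natCast_apply] at h
    rw [← div_mul_cancel₀ (c ^ M) hM]
    nth_rewrite 2 [← h]
    rw [Finset.mul_sum]
    refine Finset.sum_congr rfl fun i hi => ?_
    have hi' : i ≤ M := by simpa [Nat.lt_succ_iff] using hi
    have hb : b / c + i • (1 : ℝ) = (b + c * i) / c := by
      simp; field_simp
    rw [hb, coeff_E, coeff_E, neg_pow, div_pow]
    simp only [zsmul_eq_mul]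
    push_cast
    rw [Nat.cast_choose ℝ hi']
    have hp : (b + c * i) ^ M = (b + c * i) ^ i * (b + c * i) ^ (M - i) := by
      rw [← pow_add, Nat.add_sub_cancel' hi']
    rw [hp]
    field_simp

/-- Abel's identity in the form due to Cauchy. -/
lemma abel_core (a b c : ℝ) (N : ℕ) :
    ∑ x ∈ antidiagonal N, coeff x.1 (E (b + c * x.1)) * coeff x.2 (E (a + c * x.2))
      = coeff N (E (a + b + c * N) * U c) := by
  set s := a + b + c * N with hs
  have h1 : ∀ x ∈ antidiagonal N,
      coeff x.1 (E (b + c * x.1)) * coeff x.2 (E (a + c * x.2))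
      = ∑ y ∈ antidiagonal x.2, coeff x.1 (E (b + c * x.1)) *
          (coeff y.1 (E (-(b + c * x.1))) * coeff y.2 (E s)) := by
    intro x hx
    have hx' : (x.1 : ℝ) + x.2 = N := by exact_mod_cast mem_antidiagonal.1 hx
    have : a + c * x.2 = -(b + c * x.1) + s := by rw [hs, ← hx']; ring
    rw [this, ← E_mul_E (-(b + c * x.1)) s, coeff_mul, Finset.mul_sum]
  rw [Finset.sum_congr rfl h1,
    sum_antidiagonal_assoc N fun i u v => coeff i (E (b + c * i)) *
      (coeff u (E (-(b + c * i))) * coeff v (E s)),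
    mul_comm, coeff_mul]
  refine Finset.sum_congr rfl fun x _ => ?_
  rw [coeff_U, ← sum_fwdDiff b c x.1, Finset.sum_mul]
  exact Finset.sum_congr rfl fun y _ => by ring

/-- The identity `abel_core` with an arbitrary power series factor `f`, obtained from it by
linearity: a monomial `T^v` in `f` only shifts `a` by `c v`. -/
lemma abel_conv (a b c : ℝ) (f : PowerSeries ℝ) (n : ℕ) :
    ∑ x ∈ antidiagonal n, coeff x.1 (E (b + c * x.1)) * coeff x.2 (E (a + c * x.2) * f)
      = coeff n (E (a + b + c * n) * (U c * f)) := by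
  have h1 : ∀ x ∈ antidiagonal n,
      coeff x.1 (E (b + c * x.1)) * coeff x.2 (E (a + c * x.2) * f)
      = ∑ y ∈ antidiagonal x.2, coeff x.1 (E (b + c * x.1)) *
          (coeff y.1 (E (a + c * y.2 + c * y.1)) * coeff y.2 f) := by
    intro x _
    rw [coeff_mul, Finset.mul_sum]
    refine Finset.sum_congr rfl fun y hy => ?_
    have hy' : (y.1 : ℝ) + y.2 = x.2 := by exact_mod_cast mem_antidiagonal.1 hy
    have : a + c * x.2 = a + c * y.2 + c * y.1 := by rw [← hy']; ring
    rw [this]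
  rw [Finset.sum_congr rfl h1,
    sum_antidiagonal_assoc n fun i u v => coeff i (E (b + c * i)) *
      (coeff u (E (a + c * v + c * u)) * coeff v f),
    ← mul_assoc, coeff_mul]
  refine Finset.sum_congr rfl fun x hx => ?_
  have hx' : (x.1 : ℝ) + x.2 = n := by exact_mod_cast mem_antidiagonal.1 hx
  have : a + b + c * n = (a + c * x.2) + b + c * x.1 := by rw [← hx']; ring
  rw [this, ← abel_core, Finset.sum_mul]
  exact Finset.sum_congr rfl fun y _ => by ring

lemma sum_antidiagonalTuple_succ (k n : ℕ) (f : (Fin (k + 1) → ℕ) → ℝ) :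
    ∑ X ∈ Finset.Nat.antidiagonalTuple (k + 1) n, f X
      = ∑ x ∈ antidiagonal n, ∑ Y ∈ Finset.Nat.antidiagonalTuple k x.2,
          f (Fin.cons x.1 Y) := by
  rw [Finset.sum_sigma']
  symm
  refine Finset.sum_bij' (fun z _ => Fin.cons z.1.1 z.2)
    (fun X _ => ⟨(X 0, ∑ i, Fin.tail X i), Fin.tail X⟩) ?_ ?_ ?_ ?_ ?_
  · rintro ⟨⟨i, j⟩, Y⟩ h
    simp only [mem_sigma, HasAntidiagonal.mem_antidiagonal, Finset.Nat.mem_antidiagonalTuple] at h ⊢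
    simp [Fin.sum_univ_succ, h.1, h.2]
  · intro X h
    simp only [mem_sigma, HasAntidiagonal.mem_antidiagonal, Finset.Nat.mem_antidiagonalTuple] at h ⊢
    rw [Fin.sum_univ_succ] at h
    exact ⟨h, trivial⟩
  · rintro ⟨⟨i, j⟩, Y⟩ h
    simp only [mem_sigma, HasAntidiagonal.mem_antidiagonal, Finset.Nat.mem_antidiagonalTuple] at h
    obtain ⟨_, rfl⟩ := h
    simp
  · intro X _
    simp
  · intro _ _
    rfl

/-- The convolution of the `r + 1` sequences `x ↦ (aᵢ + c x)^x / x!`. -/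
lemma sum_tuple_eq_coeff (c : ℝ) (r n : ℕ) (a : Fin (r + 1) → ℝ) :
    ∑ X ∈ Finset.Nat.antidiagonalTuple (r + 1) n, ∏ i, coeff (X i) (E (a i + c * X i))
      = coeff n (E (∑ i, a i + c * n) * U c ^ r) := by
  induction r generalizing n with
  | zero => simp [Finset.Nat.antidiagonalTuple_one]
  | succ r ih =>
    rw [sum_antidiagonalTuple_succ, pow_succ', Fin.sum_univ_succ, add_comm (a 0), ← abel_conv]
    refine Finset.sum_congr rfl fun x _ => ?_
    rw [← ih x.2 (fun i => a i.succ), Finset.mul_sum]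
    refine Finset.sum_congr rfl fun Y _ => ?_
    rw [Fin.prod_univ_succ]
    simp

end AbelSum

open AbelSum in
theorem Gfun_eq_Gpoly (k n : ℕ) (hk : 2 ≤ k) (hn : 1 ≤ n)
    (l : ℝ) (hl0 : 0 ≤ l) (hl1 : l ≤ 1)
    (p : Fin k → ℝ) (hp : ∀ i, 0 ≤ p i) (hps : ∑ i, p i = 1) :
    Gfun k n l p = Gpoly k n l := by
  obtain ⟨r, rfl⟩ : ∃ r, k = r + 1 + 1 := ⟨k - 2, by omega⟩
  have hn0 : (n : ℝ) ≠ 0 := by positivity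
  have h1 : Gfun (r + 1 + 1) n l p = n.factorial *
      ∑ X ∈ Finset.Nat.antidiagonalTuple (r + 1 + 1) n,
        ∏ i, PowerSeries.coeff (X i) (E ((1 - l) * p i + l / n * X i)) := by
    rw [Gfun, Finset.mul_sum]
    refine Finset.sum_congr rfl fun X hX => ?_
    rw [Finset.Nat.mem_antidiagonalTuple] at hX
    have hm := Nat.multinomial_spec Finset.univ X
    rw [hX] at hm
    rw [← hm]
    simp only [coeff_E, Finset.prod_div_distrib]
    push_cast
    have h0 : (∏ i, ((X i).factorial : ℝ)) ≠ 0 :=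
      Finset.prod_ne_zero_iff.2 fun i _ => by positivity
    have hb : ∀ i, (1 - l) * p i + l / n * X i = l * X i / n + (1 - l) * p i := by
      intro i; ring
    simp only [hb]
    field_simp
  have h2 : ∑ i, (1 - l) * p i + l / n * n = 1 := by
    rw [← Finset.mul_sum, hps]; field_simp; ring
  rw [h1, sum_tuple_eq_coeff, h2, mul_comm (E 1), PowerSeries.coeff_mul,
    Finset.Nat.sum_antidiagonal_eq_sum_range_succ_mk, Finset.mul_sum, Gpoly]
  refine Finset.sum_congr rfl fun m _ => ?_
  have e1 : m + (r + 1 + 1) - 2 = r + m := by omega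
  have e2 : r + 1 + 1 - 2 = r := by omega
  rw [coeff_U_pow, coeff_E, e1, e2, div_pow, one_pow]
  field_simp
end

section
/- For every integer k ≥ 2 and every real λ with 0 ≤ λ ≤ 1, the sequence n ↦ G_{k,n}(λ) is nondecreasing in n; that is, G_{k,n}(λ) ≤ G_{k,n+1}(λ) for all n ≥ 1. -/
/-!
For `m ≤ n` the weight `n! / (n ^ m (n - m)!)` equals `∏_{i < m} (1 - i / n)`, and each factor is
nondecreasing in `n`. Hence each coefficient of `Gpoly k n` is at most the corresponding coefficient
of `Gpoly k (n + 1)`, and the latter has one more nonnegative term. The comparison of the weights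
is done in `ℕ`, with denominators cleared, in `descFactorial_mul_pow_le`.
-/

open Finset

lemma descFactorial_mul_pow_le (n m : ℕ) :
    n.descFactorial m * (n + 1) ^ m ≤ (n + 1).descFactorial m * n ^ m := by
  induction m with
  | zero => simp
  | succ m ih =>
    have h : (n - m) * (n + 1) ≤ (n + 1 - m) * n := by
      rcases le_total n m with h | h
      · simp [Nat.sub_eq_zero_of_le h]
      · obtain ⟨d, rfl⟩ := Nat.exists_eq_add_of_le h
        rw [show m + d - m = d by omega, show m + d + 1 - m = d + 1 by omega]
        nlinarith
    calc n.descFactorial (m + 1) * (n + 1) ^ (m + 1)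
        = ((n - m) * (n + 1)) * (n.descFactorial m * (n + 1) ^ m) := by
          rw [Nat.descFactorial_succ]; ring
      _ ≤ ((n + 1 - m) * n) * ((n + 1).descFactorial m * n ^ m) := Nat.mul_le_mul h ih
      _ = (n + 1).descFactorial (m + 1) * n ^ (m + 1) := by
          rw [Nat.descFactorial_succ]; ring

lemma weight_eq_descFactorial_div (n m : ℕ) (h : m ≤ n) :
    (Nat.factorial n : ℝ) / ((n : ℝ) ^ m * (Nat.factorial (n - m) : ℝ)) =
      (n.descFactorial m : ℝ) / (n : ℝ) ^ m := by
  have h1 : ((n - m).factorial : ℝ) ≠ 0 := by positivity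
  rw [← Nat.factorial_mul_descFactorial h, Nat.cast_mul, mul_comm ((n : ℝ) ^ m),
    mul_div_mul_left _ _ h1]

theorem Gpoly_mono_in_n (k : ℕ) (hk : 2 ≤ k) (l : ℝ) (hl0 : 0 ≤ l) (hl1 : l ≤ 1) :
    ∀ n : ℕ, 1 ≤ n → Gpoly k n l ≤ Gpoly k (n + 1) l := by
  intro n hn
  unfold Gpoly
  rw [Finset.sum_range_succ _ (n + 1)]
  refine le_add_of_le_of_nonneg (Finset.sum_le_sum fun m hm => ?_) (by positivity)
  have hmn : m ≤ n := Nat.lt_succ_iff.mp (Finset.mem_range.mp hm)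
  rw [weight_eq_descFactorial_div n m hmn, weight_eq_descFactorial_div (n + 1) m (by omega)]
  have hn0 : (0 : ℝ) < n := by exact_mod_cast hn
  have hw : (n.descFactorial m : ℝ) / (n : ℝ) ^ m ≤
      ((n + 1).descFactorial m : ℝ) / ((n + 1 : ℕ) : ℝ) ^ m := by
    rw [div_le_div_iff₀ (by positivity) (by positivity)]
    exact_mod_cast descFactorial_mul_pow_le n m
  gcongr
end

section
/- For every fixed integer n ≥ 1 and every fixed real λ with 0 < λ ≤ 1, there exist a constant c > 0 and an integer K such that for all k ≥ K, the moment generating function at the uniform probability vector satisfies φ_{k,n}(λ, (1/k, …, 1/k)) ≥ c · k^{λ n}. Consequently, any function H_{k,n}(λ) satisfying H_{k,n}(λ) ≥ φ_{k,n}(λ, p) for all probability vectors p must satisfy log H_{k,n}(λ) ≥ λ n log k + log c for all k ≥ K. -/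
/-!
For the uniform vector every type `X` has `D(p̂‖p) ≥ log (k/n)`: each nonzero count satisfies
`X i ≥ 1`, so `log (X i * k / n) ≥ log (k / n)`, and the weights `X i / n` sum to one. Hence every
exponential in `φ` is at least `(k/n)^(λ n)`, and averaging against the multinomial probabilities,
which sum to one by the multinomial theorem, gives `φ ≥ n^(-λ n) * k^(λ n)`. So
`c = n^(-λ n)` and `K = 1` work, and the bound on `log H` follows by monotonicity of `log`.
-/

open Finset

lemma sum_multP (k n : ℕ) (p : Fin k → ℝ) (hp : ∑ i, p i = 1) :
    ∑ X ∈ Finset.Nat.antidiagonalTuple k n, multP k p X = 1 := by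
  have h := Finset.sum_pow_eq_sum_piAntidiag (Finset.univ : Finset (Fin k)) p n
  rw [hp, one_pow] at h
  rw [h]
  refine Finset.sum_congr ?_ fun X _ => rfl
  ext X
  simp [Finset.Nat.mem_antidiagonalTuple]

lemma log_le_relEnt_uniform (k n : ℕ) (hn : 1 ≤ n) (hk : 1 ≤ k) (X : Fin k → ℕ)
    (hX : ∑ i, X i = n) :
    Real.log ((k : ℝ) / n) ≤ relEnt k n (fun _ => 1 / (k : ℝ)) X := by
  have hn' : (0 : ℝ) < n := by exact_mod_cast hn
  have hk' : (0 : ℝ) < k := by exact_mod_cast hk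
  have hsum : ∑ i, (X i : ℝ) / n = 1 := by
    rw [← Finset.sum_div, ← Nat.cast_sum, hX, div_self hn'.ne']
  calc Real.log ((k : ℝ) / n) = ∑ i, (X i : ℝ) / n * Real.log ((k : ℝ) / n) := by
        rw [← Finset.sum_mul, hsum, one_mul]
    _ ≤ _ := by
        refine Finset.sum_le_sum fun i _ => ?_
        rcases Nat.eq_zero_or_pos (X i) with h0 | h1
        · simp [h0]
        · have h1' : (1 : ℝ) ≤ X i := by exact_mod_cast h1
          refine mul_le_mul_of_nonneg_left (Real.log_le_log (by positivity) ?_) (by positivity)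
          have he : (X i : ℝ) / (n * (1 / (k : ℝ))) = X i * (k / n) := by field_simp
          rw [he]
          exact le_mul_of_one_le_left (by positivity) h1'

lemma rpow_le_phi_uniform (n : ℕ) (hn : 1 ≤ n) (l : ℝ) (hl0 : 0 < l) (k : ℕ) (hk : 1 ≤ k) :
    ((k : ℝ) / n) ^ (l * (n : ℝ)) ≤ phi k n l (fun _ => 1 / (k : ℝ)) := by
  have hn' : (0 : ℝ) < n := by exact_mod_cast hn
  have hk' : (0 : ℝ) < k := by exact_mod_cast hk
  have hp : ∑ _i : Fin k, 1 / (k : ℝ) = 1 := by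
    simp [hk'.ne']
  calc ((k : ℝ) / n) ^ (l * (n : ℝ))
      = ∑ X ∈ Finset.Nat.antidiagonalTuple k n, multP k (fun _ => 1 / (k : ℝ)) X *
          ((k : ℝ) / n) ^ (l * (n : ℝ)) := by
        rw [← Finset.sum_mul, sum_multP k n _ hp, one_mul]
    _ ≤ _ := by
        refine Finset.sum_le_sum fun X hX => ?_
        refine mul_le_mul_of_nonneg_left ?_ (by unfold multP; positivity)
        rw [Real.rpow_def_of_pos (by positivity), mul_comm, Real.exp_le_exp]
        exact mul_le_mul_of_nonneg_left
          (log_le_relEnt_uniform k n hn hk X (Finset.Nat.mem_antidiagonalTuple.mp hX))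
          (by positivity)

theorem mgf_uniform_lower_bound (n : ℕ) (hn : 1 ≤ n) (l : ℝ) (hl0 : 0 < l) (hl1 : l ≤ 1) :
    ∃ c > (0 : ℝ), ∃ K : ℕ, ∀ k : ℕ, K ≤ k →
      c * (k : ℝ) ^ (l * (n : ℝ)) ≤ phi k n l (fun _ => 1 / (k : ℝ)) ∧
      ∀ H : ℝ,
        (∀ p : Fin k → ℝ, (∀ i, 0 < p i) → ∑ i, p i = 1 → phi k n l p ≤ H) →
        l * (n : ℝ) * Real.log k + Real.log c ≤ Real.log H := by
  have hn' : (0 : ℝ) < n := by exact_mod_cast hn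
  have hc : (0 : ℝ) < ((n : ℝ) ^ (l * (n : ℝ)))⁻¹ := by positivity
  refine ⟨((n : ℝ) ^ (l * (n : ℝ)))⁻¹, hc, 1, fun k hk => ?_⟩
  have hk' : (0 : ℝ) < k := by exact_mod_cast hk
  have hphi : ((n : ℝ) ^ (l * (n : ℝ)))⁻¹ * (k : ℝ) ^ (l * (n : ℝ)) ≤
      phi k n l (fun _ => 1 / (k : ℝ)) := by
    have h := rpow_le_phi_uniform n hn l hl0 k hk
    rwa [Real.div_rpow hk'.le hn'.le, div_eq_inv_mul] at h
  refine ⟨hphi, fun H hH => ?_⟩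
  have hpos : (0 : ℝ) < (k : ℝ) ^ (l * (n : ℝ)) := by positivity
  have hle := hphi.trans (hH (fun _ => 1 / (k : ℝ)) (fun _ => by positivity) (by simp [hk'.ne']))
  have hlog := Real.log_le_log (mul_pos hc hpos) hle
  rw [Real.log_mul hc.ne' hpos.ne', Real.log_rpow hk'] at hlog
  linarith
end

section
/- For all integers k ≥ 2 and n ≥ 1 and every real t with t > min(log G_{k,n}(1), k−1), one has min_{λ ∈ [0,1]} exp(−λt) · G_{k,n}(λ) < 1. -/
/-!
The objective `exp (-(l * t)) * G l` is below `1` at `l = 1` as soon as `t > log G(1)`. When only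
`t > k - 1` is known, the objective equals `1` at `l = 0` and its derivative there is
`G'(0) - t = (k - 1) - t < 0`, since the linear coefficient of `G` is `k - 1`; hence the objective
drops below `1` for small positive `l`.
-/

open Finset

theorem Gpoly_zero (k n : ℕ) : Gpoly k n 0 = 1 := by
  unfold Gpoly
  rw [Finset.sum_range_succ', Finset.sum_eq_zero]
  · simp [Nat.factorial_ne_zero]
  · intro m _
    simp

theorem Gpoly_one_pos (k n : ℕ) (hn : 1 ≤ n) : 0 < Gpoly k n 1 := by
  unfold Gpoly
  have hn' : (0 : ℝ) < n := by exact_mod_cast hn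
  refine Finset.sum_pos' (fun m _ => by positivity) ⟨0, by simp, ?_⟩
  have : 0 < Nat.choose (0 + k - 2) (k - 2) := Nat.choose_pos (by omega)
  positivity

theorem hasDerivAt_Gpoly_zero (k n : ℕ) (hk : 2 ≤ k) (hn : 1 ≤ n) :
    HasDerivAt (Gpoly k n) ((k : ℝ) - 1) 0 := by
  have h : HasDerivAt (Gpoly k n) (∑ m ∈ Finset.range (n + 1),
      (Nat.factorial n : ℝ) / ((n : ℝ) ^ m * (Nat.factorial (n - m) : ℝ)) *
        (Nat.choose (m + k - 2) (k - 2) : ℝ) * ((m : ℝ) * 0 ^ (m - 1))) 0 := by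
    unfold Gpoly
    exact HasDerivAt.fun_sum fun m _ => (hasDerivAt_pow m (0 : ℝ)).const_mul _
  convert h using 1
  -- Only the term `m = 1` survives.
  rw [Finset.sum_eq_single 1]
  · obtain ⟨j, rfl⟩ := Nat.exists_eq_add_of_le' hk
    obtain ⟨p, rfl⟩ := Nat.exists_eq_add_of_le' hn
    have hp : (Nat.factorial p : ℝ) ≠ 0 := by exact_mod_cast Nat.factorial_ne_zero p
    have hp' : (p : ℝ) + 1 ≠ 0 := by positivity
    have h1 : 1 + (j + 2) - 2 = j + 1 := by omega
    rw [h1]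
    simp only [Nat.add_sub_cancel, Nat.choose_succ_self_right, Nat.factorial_succ]
    push_cast
    field_simp
    ring
  · intro m _ hm
    rcases Nat.eq_zero_or_pos m with rfl | hpos
    · simp
    · rw [zero_pow (by omega)]
      simp
  · intro h1
    exact absurd (Finset.mem_range.mpr (by omega)) h1

theorem chernoff_meaningful (k n : ℕ) (hk : 2 ≤ k) (hn : 1 ≤ n) (t : ℝ)
    (ht : min (Real.log (Gpoly k n 1)) ((k : ℝ) - 1) < t) :
    ∃ l ∈ Set.Icc (0 : ℝ) 1, Real.exp (-(l * t)) * Gpoly k n l < 1 := by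
  rcases min_lt_iff.mp ht with h | h
  · refine ⟨1, by simp, ?_⟩
    have hG := (Real.log_lt_iff_lt_exp (Gpoly_one_pos k n hn)).mp h
    calc Real.exp (-(1 * t)) * Gpoly k n 1 < Real.exp (-(1 * t)) * Real.exp t := by gcongr
      _ = 1 := by rw [← Real.exp_add]; simp
  · have hE : HasDerivAt (fun l : ℝ => Real.exp (-(l * t))) (-t) 0 := by
      simpa using ((hasDerivAt_id (0 : ℝ)).mul_const t).fun_neg.exp
    have hF : HasDerivAt (fun l : ℝ => Real.exp (-(l * t)) * Gpoly k n l) ((k : ℝ) - 1 - t) 0 := by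
      refine (hE.fun_mul (hasDerivAt_Gpoly_zero k n hk hn)).congr_deriv ?_
      simp [Gpoly_zero]
      ring
    have hslope := hF.tendsto_slope_zero_right.eventually_lt_const (sub_neg.mpr h)
    have hmem : ∀ᶠ l : ℝ in nhdsWithin 0 (Set.Ioi 0), l ∈ Set.Ioc (0 : ℝ) 1 :=
      Ioc_mem_nhdsGT one_pos
    obtain ⟨l, hl, hl0, hl1⟩ := (hslope.and hmem).exists
    refine ⟨l, ⟨hl0.le, hl1⟩, ?_⟩
    simp only [smul_eq_mul, zero_add, zero_mul, neg_zero, Real.exp_zero, Gpoly_zero, one_mul] at hl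
    have := neg_of_mul_neg_right hl (inv_pos.mpr hl0).le
    linarith
end

section
/- For all integers k ≥ 2 and n ≥ 1, every probability vector p with all p_i > 0, and every real t > k−1, the tail probability satisfies P(n·D(p̂‖p) > t) ≤ exp(−t) · exp(k−1) · G_{k,n}(1 − (k−1)/t). -/
/-!
The proof is a Chernoff bound at `l = 1 - (k-1)/t`, for which `l * t = t - (k-1)`; what has to be
shown is that the moment generating function `E exp(l n D)` is at most `Gpoly k n l` for
`0 < l ≤ 1`.

The weighted AM-GM inequality `q ^ l * p ^ (1-l) ≤ l q + (1-l) p`, applied with `q = Xᵢ / n` in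
each coordinate, gives `phi ≤ Gfun`. In fact `Gfun` does not depend on `p` and equals `Gpoly`.
This is the case `a = l/n`, `bᵢ = (1-l) pᵢ` (so that `n a + ∑ bᵢ = 1`) of the Abel–Hurwitz type
identity `sum_tuple_prod`,
`∑_{|X| = n} ∏ᵢ (a Xᵢ + bᵢ)^{Xᵢ} / Xᵢ! = ∑_{m+j=n} C(m+k-2, m) a^m (n a + ∑ bᵢ)^j / j!`.
It follows by induction on the number of variables from its two-variable case `abel_two`, which
after binomial expansion says that the `M`-th finite difference of `(a x + b)^M` is `M! a^M`.
-/

open Finset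

/-! ### Sums over triples with a given total -/

lemma antidiag_assoc (n : ℕ) (g : ℕ → ℕ → ℕ → ℝ) :
    ∑ p ∈ antidiagonal n, ∑ q ∈ antidiagonal p.2, g p.1 q.1 q.2 =
      ∑ p ∈ antidiagonal n, ∑ q ∈ antidiagonal p.1, g q.1 q.2 p.2 := by
  rw [Finset.sum_sigma', Finset.sum_sigma']
  refine Finset.sum_nbij' (fun s => ⟨(s.1.1 + s.2.1, s.2.2), (s.1.1, s.2.1)⟩)
    (fun s => ⟨(s.2.1, s.2.2 + s.1.2), (s.2.2, s.1.2)⟩) ?_ ?_ ?_ ?_ ?_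
  · rintro ⟨⟨x, y⟩, ⟨i, j⟩⟩ h
    simp only [Finset.mem_sigma, HasAntidiagonal.mem_antidiagonal] at h ⊢
    lia
  · rintro ⟨⟨x, y⟩, ⟨i, j⟩⟩ h
    simp only [Finset.mem_sigma, HasAntidiagonal.mem_antidiagonal] at h ⊢
    lia
  · rintro ⟨⟨x, y⟩, ⟨i, j⟩⟩ h
    simp only [Finset.mem_sigma, HasAntidiagonal.mem_antidiagonal] at h
    obtain ⟨h1, rfl⟩ := h
    rfl
  · rintro ⟨⟨x, y⟩, ⟨i, j⟩⟩ h
    simp only [Finset.mem_sigma, HasAntidiagonal.mem_antidiagonal] at h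
    obtain ⟨h1, rfl⟩ := h
    rfl
  · intros; rfl

lemma antidiag_left_comm (n : ℕ) (g : ℕ → ℕ → ℕ → ℝ) :
    ∑ p ∈ antidiagonal n, ∑ q ∈ antidiagonal p.2, g p.1 q.1 q.2 =
      ∑ p ∈ antidiagonal n, ∑ q ∈ antidiagonal p.2, g q.1 p.1 q.2 := by
  rw [antidiag_assoc, antidiag_assoc n fun x y z => g y x z]
  exact Finset.sum_congr rfl fun p _ =>
    (Finset.Nat.sum_antidiagonal_swap (f := fun q => g q.1 q.2 p.2)).symm

/-! ### The two-variable Abel identity -/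

lemma sum_antidiagonal_div_factorial (n : ℕ) (u v : ℝ) :
    ∑ q ∈ antidiagonal n, u ^ q.1 / (q.1.factorial : ℝ) * (v ^ q.2 / (q.2.factorial : ℝ)) =
      (u + v) ^ n / (n.factorial : ℝ) := by
  rw [(Commute.all u v).add_pow', Finset.sum_div]
  refine Finset.sum_congr rfl fun q hq => ?_
  obtain rfl := HasAntidiagonal.mem_antidiagonal.1 hq
  rw [nsmul_eq_mul, ← Nat.add_choose_mul_factorial_mul_factorial q.1 q.2]
  have := Nat.choose_pos (Nat.le_add_right q.1 q.2)
  rw [Nat.choose_symm_add] at this ⊢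
  push_cast
  field_simp

/-- The `M`-th forward difference of `x ↦ (a x + b)^M` is `M! a^M`, divided by `M!`. -/
lemma sum_diff_pow (M : ℕ) (a b : ℝ) (ha : a ≠ 0) :
    ∑ q ∈ antidiagonal M, (-1) ^ q.2 * (a * q.1 + b) ^ M /
      ((q.1.factorial : ℝ) * (q.2.factorial : ℝ)) = a ^ M := by
  have h := congrFun (fwdDiff_iter_eq_factorial (R := ℝ) (n := M)) (b / a)
  rw [fwdDiff_iter_eq_sum_shift, ← Finset.Nat.sum_antidiagonal_eq_sum_range_succ_mk
    (fun q => ((-1 : ℤ) ^ (M - q.1) * (M.choose q.1 : ℤ)) • (b / a + q.1 • (1:ℝ)) ^ M) M] at h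
  have h' : (M.factorial : ℝ) * ∑ q ∈ antidiagonal M, (-1) ^ q.2 * (a * q.1 + b) ^ M /
      ((q.1.factorial : ℝ) * (q.2.factorial : ℝ)) = (M.factorial : ℝ) * a ^ M := by
    have h2 : (M.factorial : ℝ) * a ^ M = a ^ M * ((M.factorial : ℝ)) := mul_comm _ _
    rw [h2]
    simp only [Pi.natCast_apply] at h
    conv_rhs => rw [← h]
    rw [Finset.mul_sum, Finset.mul_sum]
    refine Finset.sum_congr rfl fun q hq => ?_
    clear h
    obtain rfl := HasAntidiagonal.mem_antidiagonal.1 hq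
    have h3 : a * (q.1 : ℝ) + b = a * (b / a + q.1 • (1:ℝ)) := by
      simp only [nsmul_eq_mul]; field_simp; ring
    rw [h3, mul_pow, ← Nat.add_choose_mul_factorial_mul_factorial q.1 q.2, zsmul_eq_mul,
      Nat.add_sub_cancel_left]
    rw [Nat.choose_symm_add]
    push_cast
    field_simp
  exact mul_left_cancel₀ (by positivity) h'

/-- The case of two variables. The proof fixes `u = a N + b + c` and expands
`(u - (a x + b))^y`; collecting the powers of `u` leaves the finite differences of
`sum_diff_pow`. -/
lemma abel_two (N : ℕ) (a b c : ℝ) (ha : a ≠ 0) :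
    ∑ p ∈ antidiagonal N, (a * p.1 + b) ^ p.1 / (p.1.factorial : ℝ) *
        ((a * p.2 + c) ^ p.2 / (p.2.factorial : ℝ)) =
      ∑ p ∈ antidiagonal N, a ^ p.1 * ((a * N + b + c) ^ p.2 / (p.2.factorial : ℝ)) := by
  set u : ℝ := a * N + b + c with hu
  obtain ⟨g, hg⟩ : ∃ g : ℕ → ℕ → ℕ → ℝ, g = fun x j i : ℕ => (-1 : ℝ) ^ j * (a * x + b) ^ (x + j) /
      ((x.factorial : ℝ) * (j.factorial : ℝ)) * (u ^ i / (i.factorial : ℝ)) := ⟨_, rfl⟩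
  have h1 : ∀ p ∈ antidiagonal N, (a * p.1 + b) ^ p.1 / (p.1.factorial : ℝ) *
        ((a * p.2 + c) ^ p.2 / (p.2.factorial : ℝ)) =
      ∑ q ∈ antidiagonal p.2, g p.1 q.1 q.2 := by
    intro p hp
    -- For `x + y = N` the second base is `a y + c = u - (a x + b)`.
    have h2 : a * (p.2 : ℝ) + c = -(a * p.1 + b) + u := by
      rw [hu, ← HasAntidiagonal.mem_antidiagonal.1 hp]; push_cast; ring
    rw [h2, ← sum_antidiagonal_div_factorial p.2, Finset.mul_sum]
    refine Finset.sum_congr rfl fun q _ => ?_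
    simp only [hg]
    rw [neg_pow, pow_add]
    field_simp
  rw [Finset.sum_congr rfl h1, antidiag_assoc]
  refine Finset.sum_congr rfl fun p _ => ?_
  rw [← sum_diff_pow p.1 a b ha, Finset.sum_mul]
  refine Finset.sum_congr rfl fun q hq => ?_
  simp only [hg, HasAntidiagonal.mem_antidiagonal.1 hq]

/-! ### The identity for arbitrarily many variables -/

lemma sum_multichoose (k s : ℕ) :
    ∑ q ∈ antidiagonal s, k.multichoose q.1 = (k + 1).multichoose s := by
  induction s with
  | zero => simp
  | succ s ih => rw [Finset.Nat.sum_antidiagonal_succ', ih, Nat.multichoose_succ_succ]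

/-- Inductive step of `sum_tuple_prod`: adding one variable with parameter `b` to variables whose
parameters sum to `B`. -/
lemma abel_step (k n : ℕ) (a b B : ℝ) (ha : a ≠ 0) :
    ∑ p ∈ antidiagonal n, (a * p.1 + b) ^ p.1 / (p.1.factorial : ℝ) *
        ∑ q ∈ antidiagonal p.2, (k.multichoose q.1 : ℝ) * a ^ q.1 *
          ((a * p.2 + B) ^ q.2 / (q.2.factorial : ℝ)) =
      ∑ p ∈ antidiagonal n, ((k + 1).multichoose p.1 : ℝ) * a ^ p.1 *
          ((a * n + (b + B)) ^ p.2 / (p.2.factorial : ℝ)) := by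
  obtain ⟨g, hg⟩ : ∃ g : ℕ → ℕ → ℕ → ℝ, g = fun x m j : ℕ => (a * x + b) ^ x / (x.factorial : ℝ) *
      ((k.multichoose m : ℝ) * a ^ m * ((a * j + (a * m + B)) ^ j / (j.factorial : ℝ))) := ⟨_, rfl⟩
  obtain ⟨g', hg'⟩ : ∃ g' : ℕ → ℕ → ℕ → ℝ, g' = fun m i l : ℕ => (k.multichoose m : ℝ) *
      (a ^ (m + i) * ((a * n + (b + B)) ^ l / (l.factorial : ℝ))) := ⟨_, rfl⟩
  calc _ = ∑ p ∈ antidiagonal n, ∑ q ∈ antidiagonal p.2, g p.1 q.1 q.2 := by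
        refine Finset.sum_congr rfl fun p _ => ?_
        rw [Finset.mul_sum]
        refine Finset.sum_congr rfl fun q hq => ?_
        have : a * (p.2 : ℝ) + B = a * q.2 + (a * q.1 + B) := by
          rw [← HasAntidiagonal.mem_antidiagonal.1 hq]; push_cast; ring
        simp only [hg, this]
    _ = ∑ p ∈ antidiagonal n, ∑ q ∈ antidiagonal p.2, g' p.1 q.1 q.2 := by
        rw [antidiag_left_comm]
        refine Finset.sum_congr rfl fun p hp => ?_
        have h := abel_two p.2 a b (a * p.1 + B) ha
        have h2 : a * (p.2 : ℝ) + b + (a * p.1 + B) = a * n + (b + B) := by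
          rw [← HasAntidiagonal.mem_antidiagonal.1 hp]; push_cast; ring
        rw [h2] at h
        simp only [hg, hg', pow_add, mul_assoc (a ^ p.1)]
        simp only [← Finset.mul_sum]
        rw [← h, Finset.mul_sum, Finset.mul_sum]
        refine Finset.sum_congr rfl fun q _ => ?_
        ring
    _ = _ := by
        rw [antidiag_assoc]
        refine Finset.sum_congr rfl fun p _ => ?_
        rw [← sum_multichoose, Nat.cast_sum, Finset.sum_mul, Finset.sum_mul]
        refine Finset.sum_congr rfl fun q hq => ?_
        simp only [hg', HasAntidiagonal.mem_antidiagonal.1 hq]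
        ring

lemma sum_antidiagonalTuple_succ (k n : ℕ) (f : (Fin (k + 1) → ℕ) → ℝ) :
    ∑ X ∈ Finset.Nat.antidiagonalTuple (k + 1) n, f X =
      ∑ p ∈ antidiagonal n, ∑ Y ∈ Finset.Nat.antidiagonalTuple k p.2, f (Fin.cons p.1 Y) := by
  rw [Finset.sum_sigma']
  symm
  refine Finset.sum_nbij' (fun s => Fin.cons s.1.1 s.2)
    (fun X => ⟨(X 0, ∑ i, Fin.tail X i), Fin.tail X⟩) ?_ ?_ ?_ ?_ ?_
  · rintro ⟨⟨x, y⟩, Y⟩ h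
    simp only [Finset.mem_sigma, HasAntidiagonal.mem_antidiagonal, Finset.Nat.mem_antidiagonalTuple] at h ⊢
    simp [Fin.sum_univ_succ, h]
  · intro X h
    simp only [Finset.mem_sigma, HasAntidiagonal.mem_antidiagonal, Finset.Nat.mem_antidiagonalTuple] at h ⊢
    simpa [Fin.sum_univ_succ, Fin.tail] using h
  · rintro ⟨⟨x, y⟩, Y⟩ h
    simp only [Finset.mem_sigma, HasAntidiagonal.mem_antidiagonal, Finset.Nat.mem_antidiagonalTuple] at h
    obtain ⟨-, rfl⟩ := h
    simp
  · intro X _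
    simp
  · intros; rfl

/-- The identity in `k + 1` variables; `k.multichoose m` is the coefficient `C(m + k - 1, m)` of
`z^m` in `(1 - z)^(-k)`. -/
lemma sum_tuple_prod (k n : ℕ) (a : ℝ) (ha : a ≠ 0) (b : Fin (k + 1) → ℝ) :
    ∑ X ∈ Finset.Nat.antidiagonalTuple (k + 1) n,
        ∏ i, ((a * X i + b i) ^ X i / ((X i).factorial : ℝ)) =
      ∑ p ∈ antidiagonal n, (k.multichoose p.1 : ℝ) * a ^ p.1 *
          ((a * n + ∑ i, b i) ^ p.2 / (p.2.factorial : ℝ)) := by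
  induction k generalizing n with
  | zero =>
    rw [Finset.sum_eq_single (0, n)]
    · simp
    · rintro ⟨x, y⟩ h hne
      rcases x with _ | x
      · simp_all
      · simp
    · simp
  | succ k ih =>
    rw [sum_antidiagonalTuple_succ, Fin.sum_univ_succ, ← abel_step k n a _ _ ha]
    refine Finset.sum_congr rfl fun p _ => ?_
    rw [← ih p.2 (fun i => b i.succ), Finset.mul_sum]
    refine Finset.sum_congr rfl fun Y _ => ?_
    rw [Fin.prod_univ_succ]
    simp

/-! ### The moment generating function -/

lemma multinomial_eq (k n : ℕ) (X : Fin k → ℕ) (hX : X ∈ Finset.Nat.antidiagonalTuple k n) :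
    (Nat.multinomial Finset.univ X : ℝ) = n.factorial / ∏ i, ((X i).factorial : ℝ) := by
  have h := Nat.multinomial_spec Finset.univ X
  rw [Finset.Nat.mem_antidiagonalTuple.1 hX] at h
  rw [← h]
  have : (∏ i, ((X i).factorial : ℝ)) ≠ 0 := Finset.prod_ne_zero_iff.2 fun i _ => by positivity
  push_cast
  field_simp

/-- `Gfun` does not depend on the probability vector. -/
lemma Gfun_eq (k n : ℕ) (hk : 2 ≤ k) (hn : 1 ≤ n) (p : Fin k → ℝ) (hps : ∑ i, p i = 1)
    (l : ℝ) (hl : 0 < l) : Gfun k n l p = Gpoly k n l := by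
  obtain ⟨k, rfl⟩ : ∃ j, k = j + 2 := ⟨k - 2, by lia⟩
  have hn0 : (n : ℝ) ≠ 0 := by positivity
  have key := sum_tuple_prod (k + 1) n (l / n) (by positivity) (fun i => (1 - l) * p i)
  have hone : l / n * (n : ℝ) + ∑ i, (1 - l) * p i = 1 := by
    rw [← Finset.mul_sum, hps]; field_simp; ring
  rw [hone] at key
  have h1 : Gfun (k + 1 + 1) n l p = n.factorial *
      ∑ X ∈ Finset.Nat.antidiagonalTuple (k + 1 + 1) n,
        ∏ i, ((l / n * X i + (1 - l) * p i) ^ X i / ((X i).factorial : ℝ)) := by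
    rw [Gfun, Finset.mul_sum]
    refine Finset.sum_congr rfl fun X hX => ?_
    rw [multinomial_eq _ _ X hX, Finset.prod_div_distrib]
    simp only [div_mul_eq_mul_div]
    ring
  change Gfun (k + 1 + 1) n l p = _
  rw [h1, key, Finset.Nat.sum_antidiagonal_eq_sum_range_succ_mk, Gpoly, Finset.mul_sum]
  refine Finset.sum_congr rfl fun m hm => ?_
  have h2 : (k + 1).multichoose m = (m + (k + 2) - 2).choose (k + 2 - 2) := by
    rw [Nat.multichoose_eq, show k + 1 + m - 1 = m + k by lia, show m + (k + 2) - 2 = m + k by lia,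
      Nat.add_sub_cancel, Nat.choose_symm_add]
  simp only [h2, one_pow, div_pow]
  field_simp

/-- Weighted AM-GM between `x / n` and `p`; for `x = 0` both sides are `1`. -/
lemma term_le (n x : ℕ) (hn : 1 ≤ n) (p l : ℝ) (hp : 0 < p) (hl0 : 0 ≤ l) (hl1 : l ≤ 1) :
    p ^ x * Real.exp (l * (x * Real.log (x / (n * p)))) ≤ (l * x / n + (1 - l) * p) ^ x := by
  rcases Nat.eq_zero_or_pos x with rfl | hx
  · simp
  have hn0 : (0 : ℝ) < n := by positivity
  have hx0 : (0 : ℝ) < x := by positivity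
  have h1 : l * (x * Real.log (x / (n * p))) = x * (l * Real.log (x / (n * p))) := by ring
  rw [h1, Real.exp_nat_mul, ← mul_pow]
  have h2 := convexOn_exp.2 (Set.mem_univ (Real.log (x / (n * p)))) (Set.mem_univ 0) hl0
    (sub_nonneg.2 hl1) (by ring)
  simp only [smul_eq_mul, mul_zero, add_zero, Real.exp_zero, mul_one] at h2
  rw [Real.exp_log (by positivity)] at h2
  gcongr
  calc _ ≤ p * (l * (x / (n * p)) + (1 - l)) := by gcongr
    _ = _ := by field_simp

lemma phi_le (k n : ℕ) (hn : 1 ≤ n) (p : Fin k → ℝ) (hp : ∀ i, 0 < p i)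
    (l : ℝ) (hl0 : 0 ≤ l) (hl1 : l ≤ 1) : phi k n l p ≤ Gfun k n l p := by
  refine Finset.sum_le_sum fun X _ => ?_
  have hn0 : (0 : ℝ) < n := by positivity
  have h : l * (n : ℝ) * relEnt k n p X = ∑ i, l * (X i * Real.log (X i / (n * p i))) := by
    rw [relEnt, Finset.mul_sum]
    refine Finset.sum_congr rfl fun i _ => ?_
    field_simp
  rw [h, Real.exp_sum, multP, mul_assoc, ← Finset.prod_mul_distrib]
  gcongr with i
  · intro i _
    have := hp i
    positivity
  · exact term_le n (X i) hn (p i) l (hp i) hl0 hl1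

lemma multP_nonneg (k : ℕ) (p : Fin k → ℝ) (hp : ∀ i, 0 < p i) (X : Fin k → ℕ) :
    0 ≤ multP k p X :=
  mul_nonneg (Nat.cast_nonneg _) (Finset.prod_nonneg fun i _ => pow_nonneg (hp i).le _)

/-- Chernoff bound. -/
lemma tailP_le (k n : ℕ) (p : Fin k → ℝ) (hp : ∀ i, 0 < p i) (t l : ℝ) (hl : 0 ≤ l) :
    tailP k n p t ≤ Real.exp (-(l * t)) * phi k n l p := by
  rw [tailP, phi, Finset.mul_sum]
  refine (Finset.sum_le_sum (g := fun X => Real.exp (-(l * t)) *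
    (multP k p X * Real.exp (l * (n : ℝ) * relEnt k n p X))) fun X hX => ?_).trans
      (Finset.sum_le_sum_of_subset_of_nonneg (Finset.filter_subset _ _) fun X _ _ =>
        mul_nonneg (Real.exp_pos _).le (mul_nonneg (multP_nonneg k p hp X) (Real.exp_pos _).le))
  have hX := (Finset.mem_filter.1 hX).2
  rw [mul_left_comm, ← Real.exp_add]
  refine le_mul_of_one_le_right (multP_nonneg k p hp X) (Real.one_le_exp ?_)
  nlinarith [mul_le_mul_of_nonneg_left hX.le hl]

theorem tail_bound_uncorrected (k n : ℕ) (hk : 2 ≤ k) (hn : 1 ≤ n)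
    (p : Fin k → ℝ) (hp : ∀ i, 0 < p i) (hps : ∑ i, p i = 1)
    (t : ℝ) (ht : (k : ℝ) - 1 < t) :
    tailP k n p t ≤
      Real.exp (-t) * Real.exp ((k : ℝ) - 1) * Gpoly k n (1 - ((k : ℝ) - 1) / t) := by
  have hk' : (2 : ℝ) ≤ k := by exact_mod_cast hk
  have ht0 : 0 < t := by linarith
  set l : ℝ := 1 - ((k : ℝ) - 1) / t with hl
  have hl0 : 0 < l := by rw [hl, sub_pos, div_lt_one ht0]; exact ht
  have hl1 : l ≤ 1 := by
    have : 0 ≤ ((k : ℝ) - 1) / t := div_nonneg (by linarith) ht0.le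
    linarith
  have hlt : -(l * t) = -t + ((k : ℝ) - 1) := by rw [hl]; field_simp; ring
  rw [← Real.exp_add, ← hlt, ← Gfun_eq k n hk hn p hps l hl0]
  exact (tailP_le k n p hp t l hl0.le).trans
    (mul_le_mul_of_nonneg_left (phi_le k n hn p hp l hl0.le hl1) (Real.exp_pos _).le)
end

section
/- For every fixed integer k ≥ 2 and every fixed real λ with 0 < λ < 1, as n → ∞, n · ( (k−1)/(1−λ) · G_{k,n}(λ) − G′_{k,n}(λ) ) converges to k(k−1)λ / (1−λ)^{k+2}, where G′_{k,n} denotes the derivative of G_{k,n} with respect to λ. -/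
/-!
Write `a n m = n(n-1)⋯(n-m+1) / n^m` for the coefficients and `k = j + 2`. They satisfy
`n (a n m - a n (m+1)) = m a n m` and vanish for `m > n`. Together with
`(m+1) C(m+1+j, j) = (m+1+j) C(m+j, j)`, shifting the index in `G'` gives the exact identity
`n ((k-1) G - (1-l) G') = (j+1)(j+2) ∑ₘ a n m C(m+j+1, j+2) l^m` (`correction_identity`).
As `n → ∞` each `a n m ≤ 1` tends to `1`, so by dominated convergence the right-hand side tends to
`(j+1)(j+2) ∑ₘ C(m+j+1, j+2) l^m = (j+1)(j+2) l / (1-l)^(j+3)`, a negative binomial series.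
-/

open Finset

/-- The coefficient `n! / (n^m (n-m)!)` of `Gpoly`, written with the falling factorial so that it
vanishes for `m > n`. -/
noncomputable def fallingRatio (n m : ℕ) : ℝ := (n.descFactorial m : ℝ) / (n : ℝ) ^ m

lemma fallingRatio_nonneg (n m : ℕ) : 0 ≤ fallingRatio n m := by
  unfold fallingRatio; positivity

lemma fallingRatio_le_one (n m : ℕ) : fallingRatio n m ≤ 1 := by
  unfold fallingRatio
  apply div_le_one_of_le₀
  · exact_mod_cast Nat.descFactorial_le_pow n m
  · positivity

lemma fallingRatio_succ {n : ℕ} (hn : 0 < n) (m : ℕ) :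
    fallingRatio n (m + 1) = fallingRatio n m * (1 - m / n) := by
  have hn' : (n : ℝ) ≠ 0 := by positivity
  unfold fallingRatio
  rw [Nat.descFactorial_succ]
  rcases le_or_gt m n with h | h
  · push_cast [Nat.cast_sub h]
    field_simp
    ring
  · simp [Nat.descFactorial_of_lt h]

lemma tendsto_fallingRatio (m : ℕ) :
    Filter.Tendsto (fun n : ℕ => fallingRatio n m) Filter.atTop (nhds 1) := by
  induction m with
  | zero => simp [fallingRatio]
  | succ m ih =>
    have h : Filter.Tendsto (fun n : ℕ => fallingRatio n m * (1 - (m : ℝ) / n))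
        Filter.atTop (nhds (1 * (1 - 0))) :=
      ih.mul (tendsto_const_nhds.sub (tendsto_const_div_atTop_nhds_zero_nat (m : ℝ)))
    rw [sub_zero, mul_one] at h
    refine h.congr' ?_
    filter_upwards [Filter.eventually_gt_atTop 0] with n hn
    exact (fallingRatio_succ hn m).symm

lemma Gpoly_eq (j n : ℕ) (x : ℝ) :
    Gpoly (j + 2) n x =
      ∑ m ∈ range (n + 1), fallingRatio n m * ((m + j).choose j : ℝ) * x ^ m := by
  unfold Gpoly fallingRatio
  refine sum_congr rfl fun m hm => ?_
  have hmn : m ≤ n := Nat.lt_succ_iff.mp (mem_range.mp hm)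
  have hf : (n.factorial : ℝ) = (n - m).factorial * n.descFactorial m := by
    exact_mod_cast (Nat.factorial_mul_descFactorial hmn).symm
  have h0 : ((n - m).factorial : ℝ) ≠ 0 := by positivity
  have e : m + (j + 2) - 2 = m + j := by omega
  rw [e, Nat.add_sub_cancel, hf, mul_comm ((n : ℝ) ^ m), mul_div_mul_left _ _ h0]

/-- The derivative of `Gpoly`, with the index shifted; the top term is zero. -/
lemma deriv_Gpoly (j n : ℕ) (x : ℝ) :
    deriv (Gpoly (j + 2) n) x =
      ∑ m ∈ range (n + 1),
        fallingRatio n (m + 1) * ((m + 1 + j).choose j : ℝ) * ((m + 1) * x ^ m) := by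
  have h : HasDerivAt (Gpoly (j + 2) n)
      (∑ m ∈ range (n + 1),
        fallingRatio n m * ((m + j).choose j : ℝ) * (m * x ^ (m - 1))) x := by
    have : Gpoly (j + 2) n = fun y =>
        ∑ m ∈ range (n + 1), fallingRatio n m * ((m + j).choose j : ℝ) * y ^ m :=
      funext (Gpoly_eq j n)
    rw [this]
    exact HasDerivAt.fun_sum fun m _ => (hasDerivAt_pow m x).const_mul _
  have htop : fallingRatio n (n + 1) = 0 := by
    simp [fallingRatio]
  rw [h.deriv, sum_range_succ', sum_range_succ, htop]
  simp

/-- `m (m+j+1) C(m+j, j) = (j+1)(j+2) C(m+j+1, j+2)`. -/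
lemma choose_identity (m j : ℕ) :
    (m : ℝ) * (m + j + 1) * ((m + j).choose j : ℝ) =
      (j + 1) * (j + 2) * ((m + j + 1).choose (j + 2) : ℝ) := by
  have h1 : (m + j + 1) * (m + j).choose j = (m + j + 1).choose (j + 1) * (j + 1) :=
    Nat.add_one_mul_choose_eq (m + j) j
  have h2 : (m + j + 1).choose (j + 2) * (j + 2) = (m + j + 1).choose (j + 1) * m := by
    have := Nat.choose_succ_right_eq (m + j + 1) (j + 1)
    rwa [show m + j + 1 - (j + 1) = m by omega] at this
  have h1' : ((m : ℝ) + j + 1) * (m + j).choose j = (m + j + 1).choose (j + 1) * (j + 1) := by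
    exact_mod_cast h1
  have h2' : ((m + j + 1).choose (j + 2) : ℝ) * (j + 2) = (m + j + 1).choose (j + 1) * m := by
    exact_mod_cast h2
  linear_combination (m : ℝ) * h1' - ((j : ℝ) + 1) * h2'

lemma succ_mul_choose (m j : ℕ) :
    ((m : ℝ) + 1) * ((m + 1 + j).choose j : ℝ) = (m + 1 + j) * ((m + j).choose j : ℝ) := by
  have h := Nat.choose_mul_succ_eq (m + j) j
  rw [show m + j + 1 - j = m + 1 by omega, show m + j + 1 = m + 1 + j by omega] at h
  have h' : ((m + j).choose j : ℝ) * (m + 1 + j) = (m + 1 + j).choose j * (m + 1) := by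
    exact_mod_cast h
  linear_combination -h'

lemma correction_identity {n : ℕ} (hn : 0 < n) (j : ℕ) (x : ℝ) :
    (n : ℝ) * ((j + 1) * Gpoly (j + 2) n x - (1 - x) * deriv (Gpoly (j + 2) n) x) =
      ∑ m ∈ range (n + 1),
        (j + 1) * (j + 2) * (fallingRatio n m * (((m + j + 1).choose (j + 2) : ℝ) * x ^ m)) := by
  have hn' : (n : ℝ) ≠ 0 := by positivity
  -- `x G' = ∑ m a_m c_m x^m`, obtained by undoing the index shift.
  have hx : x * deriv (Gpoly (j + 2) n) x =
      ∑ m ∈ range (n + 1), fallingRatio n m * ((m + j).choose j : ℝ) * (m * x ^ m) := by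
    rw [deriv_Gpoly, sum_range_succ, sum_range_succ']
    have htop : fallingRatio n (n + 1) = 0 := by simp [fallingRatio]
    rw [htop]
    simp only [zero_mul, add_zero, Nat.cast_zero, mul_zero, mul_sum]
    refine sum_congr rfl fun m _ => ?_
    push_cast
    ring
  have hsplit : (n : ℝ) * ((j + 1) * Gpoly (j + 2) n x - (1 - x) * deriv (Gpoly (j + 2) n) x) =
      n * ((j + 1) * Gpoly (j + 2) n x - deriv (Gpoly (j + 2) n) x
        + x * deriv (Gpoly (j + 2) n) x) := by ring
  rw [hsplit, hx, Gpoly_eq, deriv_Gpoly, mul_sum, ← sum_sub_distrib, ← sum_add_distrib, mul_sum]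
  refine sum_congr rfl fun m _ => ?_
  have hs : (n : ℝ) * fallingRatio n (m + 1) = fallingRatio n m * (n - m) := by
    rw [fallingRatio_succ hn]; field_simp
  linear_combination (-(((m + 1 + j).choose j : ℝ) * ((m + 1) * x ^ m))) * hs
    + (fallingRatio n m * x ^ m) * choose_identity m j
    - (fallingRatio n m * (n - m) * x ^ m) * succ_mul_choose m j

lemma hasSum_limit (j : ℕ) {x : ℝ} (hx0 : 0 < x) (hx1 : x < 1) :
    HasSum (fun m : ℕ => ((m + j + 1).choose (j + 2) : ℝ) * x ^ m) (x / (1 - x) ^ (j + 3)) := by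
  have hx : ‖x‖ < 1 := by rwa [Real.norm_of_nonneg hx0.le]
  have h := (hasSum_choose_mul_geometric_of_norm_lt_one (j + 2) hx).mul_left x
  rw [← hasSum_nat_add_iff' 1]
  have hterm : (fun m : ℕ => ((m + 1 + j + 1).choose (j + 2) : ℝ) * x ^ (m + 1)) =
      fun m : ℕ => x * (((m + (j + 2)).choose (j + 2) : ℝ) * x ^ m) := by
    funext m
    rw [show m + 1 + j + 1 = m + (j + 2) by omega]
    ring
  have hval : x / (1 - x) ^ (j + 3) - ∑ i ∈ range 1, ((i + j + 1).choose (j + 2) : ℝ) * x ^ i =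
      x * (1 / (1 - x) ^ (j + 2 + 1)) := by
    have h0 : (0 + j + 1).choose (j + 2) = 0 := Nat.choose_eq_zero_of_lt (by omega)
    rw [sum_range_one, h0]
    ring
  rw [hterm, hval]
  exact h

theorem limit_correction (k : ℕ) (hk : 2 ≤ k) (l : ℝ) (hl0 : 0 < l) (hl1 : l < 1) :
    Filter.Tendsto
      (fun n : ℕ =>
        (n : ℝ) * (((k : ℝ) - 1) / (1 - l) * Gpoly k n l - deriv (Gpoly k n) l))
      Filter.atTop
      (nhds ((k : ℝ) * ((k : ℝ) - 1) * l / (1 - l) ^ (k + 2))) := by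
  obtain ⟨j, rfl⟩ := Nat.exists_eq_add_of_le' hk
  have hl : 1 - l ≠ 0 := by linarith
  have hsum := hasSum_limit j hl0 hl1
  have hdom : Filter.Tendsto
      (fun n : ℕ => ∑' m : ℕ, fallingRatio n m * (((m + j + 1).choose (j + 2) : ℝ) * l ^ m))
      Filter.atTop (nhds (∑' m : ℕ, ((m + j + 1).choose (j + 2) : ℝ) * l ^ m)) := by
    refine tendsto_tsum_of_dominated_convergence hsum.summable (fun m => ?_) ?_
    · simpa using (tendsto_fallingRatio m).mul_const (((m + j + 1).choose (j + 2) : ℝ) * l ^ m)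
    · refine Filter.Eventually.of_forall fun n m => ?_
      have hpos : 0 ≤ ((m + j + 1).choose (j + 2) : ℝ) * l ^ m := by positivity
      rw [Real.norm_of_nonneg (mul_nonneg (fallingRatio_nonneg n m) hpos)]
      exact mul_le_of_le_one_left hpos (fallingRatio_le_one n m)
  rw [hsum.tsum_eq] at hdom
  have hlim := hdom.const_mul (((j : ℝ) + 1) * (j + 2) / (1 - l))
  convert hlim.congr' ?_ using 2
  · push_cast
    field_simp
    ring
  · filter_upwards [Filter.eventually_gt_atTop 0] with n hn
    have htsum : ∑' m : ℕ, fallingRatio n m * (((m + j + 1).choose (j + 2) : ℝ) * l ^ m) =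
        ∑ m ∈ range (n + 1), fallingRatio n m * (((m + j + 1).choose (j + 2) : ℝ) * l ^ m) := by
      refine tsum_eq_sum fun m hm => ?_
      have hnm : n < m := by
        rw [mem_range] at hm
        omega
      simp [fallingRatio, Nat.descFactorial_of_lt hnm]
    have hid := correction_identity hn j l
    rw [← mul_sum] at hid
    rw [htsum, div_mul_eq_mul_div, ← hid]
    push_cast
    field_simp
    ring
end

section
/- For every fixed integer k ≥ 2, the ratio log G_{k,n}(1) / log binom(n+k−1, k−1) converges to 1/2 as n → ∞. -/
/-!
Write `k = d + 2` and `a_m = n! / (n^m (n-m)!) = ∏_{i<m} (1 - i/n)`. The weights `a_m` are of order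
one up to `m ≈ √n` and then decay, so `G_{k,n}(1) = ∑ a_m C(m+d, d)` is of exact order
`√n^(d+1)`, whereas `C(n+d+1, d+1)` is of exact order `n^(d+1)`; the logarithms are thus in the
limiting ratio `1/2`.

* Upper bound (`moment_le`): the relation `n a_{m+1} = (n - m) a_m` allows summation by parts
  (`sum_by_parts`), which bounds the moments `T_j = ∑ (m+1)^j a_m` recursively by
  `T_{j+2} ≤ n (j+1) T_j + T_{j+1}`. Together with `T_0 = O(√n)` and `T_1 = O(n)` this gives
  `T_j = O(√n^(j+1))`.
* Lower bound (`sum_weight_choose_ge`): `a_m ≥ 1 - m²/n ≥ 3/4` for `m ≤ √n / 2`, and the sum of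
  `C(m+d, d)` over these `m` is a single binomial coefficient by the hockey-stick identity.
-/

open Finset

/-- The weight `a_m = n (n-1) ⋯ (n-m+1) / n^m`, the coefficient `n! / (n^m (n-m)!)` extended
by zero to `m > n`. -/
noncomputable def weight (n m : ℕ) : ℝ := (n.descFactorial m : ℝ) / (n : ℝ) ^ m

lemma weight_nonneg (n m : ℕ) : 0 ≤ weight n m := by
  unfold weight; positivity

lemma weight_zero (n : ℕ) : weight n 0 = 1 := by simp [weight]

lemma weight_le_one (n m : ℕ) : weight n m ≤ 1 := by
  unfold weight
  apply div_le_one_of_le₀ _ (by positivity)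
  exact_mod_cast Nat.descFactorial_le_pow n m

lemma weight_succ {n : ℕ} (hn : 1 ≤ n) (m : ℕ) :
    n * weight n (m + 1) = (n - m) * weight n m := by
  have hn' : (n : ℝ) ≠ 0 := by positivity
  unfold weight
  rw [Nat.descFactorial_succ]
  rcases le_or_gt m n with h | h
  · push_cast [Nat.cast_sub h]
    field_simp
    ring
  · simp [Nat.descFactorial_of_lt h]

lemma weight_eq {n m : ℕ} (h : m ≤ n) :
    (Nat.factorial n : ℝ) / ((n : ℝ) ^ m * (Nat.factorial (n - m) : ℝ)) = weight n m := by
  unfold weight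
  rw [← Nat.factorial_mul_descFactorial h]
  have := Nat.factorial_pos (n - m)
  push_cast
  field_simp

lemma weight_ge {n : ℕ} (hn : 1 ≤ n) (m : ℕ) : 1 - (m : ℝ) ^ 2 / n ≤ weight n m := by
  have hn' : (0 : ℝ) < n := by positivity
  induction m with
  | zero => simp [weight_zero]
  | succ m ih =>
    have h1 := weight_succ hn m
    have h2 := weight_le_one n m
    have h3 : weight n (m + 1) = weight n m - m / n * weight n m := by
      field_simp
      linarith
    have h4 : (m : ℝ) / n * weight n m ≤ m / n := mul_le_of_le_one_right (by positivity) h2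
    have h5 : ((m + 1 : ℕ) : ℝ) ^ 2 / n = (m : ℝ) ^ 2 / n + m / n + (m + 1) / n := by
      push_cast
      ring
    have h6 : (0 : ℝ) ≤ (m + 1) / n := by positivity
    linarith

/-- Summation by parts, using `m a_m = n (a_m - a_{m+1})`. -/
lemma sum_by_parts {n : ℕ} (hn : 1 ≤ n) (j N : ℕ) :
    ∑ m ∈ range N, (m : ℝ) * (m + 1) ^ j * weight n m + n * (N : ℝ) ^ j * weight n N
      = n * ∑ m ∈ range N, (((m : ℝ) + 1) ^ j - (m : ℝ) ^ j) * weight n m + n * 0 ^ j := by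
  induction N with
  | zero => simp [weight_zero]
  | succ N ih =>
    rw [sum_range_succ, sum_range_succ]
    have h := weight_succ hn N
    push_cast
    linear_combination ih + ((N : ℝ) + 1) ^ j * h

lemma succ_pow_sub_pow_le {x : ℝ} (hx : 0 ≤ x) (j : ℕ) :
    (x + 1) ^ (j + 1) - x ^ (j + 1) ≤ (j + 1) * (x + 1) ^ j := by
  induction j with
  | zero => simp
  | succ j ih =>
    have h1 : x ^ (j + 1) ≤ (x + 1) ^ (j + 1) := by gcongr; linarith
    have h2 := mul_le_mul_of_nonneg_left ih (by linarith : 0 ≤ x + 1)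
    calc (x + 1) ^ (j + 1 + 1) - x ^ (j + 1 + 1)
        = (x + 1) * ((x + 1) ^ (j + 1) - x ^ (j + 1)) + x ^ (j + 1) := by ring
      _ ≤ (x + 1) * ((j + 1) * (x + 1) ^ j) + (x + 1) ^ (j + 1) := add_le_add h2 h1
      _ = _ := by push_cast; ring

/-- The `j`-th (shifted) moment `T_j = ∑_{m<N} (m+1)^j a_m` of the weights. -/
noncomputable def moment (n N j : ℕ) : ℝ := ∑ m ∈ range N, ((m : ℝ) + 1) ^ j * weight n m

lemma moment_nonneg (n N j : ℕ) : 0 ≤ moment n N j :=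
  sum_nonneg fun m _ => mul_nonneg (by positivity) (weight_nonneg n m)

lemma moment_succ (n N j : ℕ) : moment n N (j + 1)
    = ∑ m ∈ range N, (m : ℝ) * (m + 1) ^ j * weight n m + moment n N j := by
  unfold moment
  rw [← sum_add_distrib]
  exact sum_congr rfl fun m _ => by ring

lemma sum_mul_weight_le {n : ℕ} (hn : 1 ≤ n) (N : ℕ) :
    ∑ m ∈ range N, (m : ℝ) * weight n m ≤ n := by
  have h := sum_by_parts hn 0 N
  have h2 : 0 ≤ n * weight n N := mul_nonneg (by positivity) (weight_nonneg n N)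
  simp at h
  linarith

lemma moment_add_two_le {n : ℕ} (hn : 1 ≤ n) (N j : ℕ) :
    moment n N (j + 2) ≤ n * ((j + 1) * moment n N j) + moment n N (j + 1) := by
  rw [moment_succ n N (j + 1)]
  have h := sum_by_parts hn (j + 1) N
  have h2 : 0 ≤ n * (N : ℝ) ^ (j + 1) * weight n N :=
    mul_nonneg (by positivity) (weight_nonneg n N)
  have h3 : ∑ m ∈ range N, (((m : ℝ) + 1) ^ (j + 1) - (m : ℝ) ^ (j + 1)) * weight n m
      ≤ (j + 1) * moment n N j := by
    unfold moment
    rw [mul_sum]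
    refine sum_le_sum fun m _ => ?_
    rw [← mul_assoc]
    exact mul_le_mul_of_nonneg_right (succ_pow_sub_pow_le (by positivity) j) (weight_nonneg n m)
  have h4 := mul_le_mul_of_nonneg_left h3 (Nat.cast_nonneg (α := ℝ) n)
  simp only [ne_eq, Nat.add_eq_zero_iff, one_ne_zero, and_false, not_false_eq_true, zero_pow,
    mul_zero, add_zero] at h
  linarith

/-- Terms with `m ≤ √n` contribute at most one each; beyond, `a_m ≤ m a_m / √n`. -/
lemma moment_zero_le {n : ℕ} (hn : 1 ≤ n) (N : ℕ) : moment n N 0 ≤ 3 * √(n : ℝ) := by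
  have hs1 : 1 ≤ √(n : ℝ) := Real.one_le_sqrt.2 (by exact_mod_cast hn)
  have hs0 : 0 < √(n : ℝ) := by linarith
  have hss : √(n : ℝ) * √(n : ℝ) = n := Real.mul_self_sqrt (by positivity)
  have key : ∀ m ∈ range N, ((m : ℝ) + 1) ^ 0 * weight n m
      ≤ (if m < Nat.sqrt n + 1 then 1 else 0) + (m : ℝ) * weight n m / √(n : ℝ) := by
    intro m _
    have hw := weight_nonneg n m
    split_ifs with h
    · have := weight_le_one n m
      have : 0 ≤ (m : ℝ) * weight n m / √(n : ℝ) := by positivity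
      linarith
    · have h1 : √(n : ℝ) ≤ m := by
        have h2 : (√(n : ℝ)) ≤ Nat.sqrt n + 1 := Real.real_sqrt_le_nat_sqrt_succ
        have h3 : ((Nat.sqrt n + 1 : ℕ) : ℝ) ≤ m := by exact_mod_cast not_lt.1 h
        push_cast at h3
        linarith
      rw [pow_zero, one_mul, zero_add, le_div_iff₀ hs0, mul_comm]
      exact mul_le_mul_of_nonneg_right h1 hw
  have hcard : ∑ m ∈ range N, (if m < Nat.sqrt n + 1 then (1 : ℝ) else 0) ≤ Nat.sqrt n + 1 := by
    rw [sum_boole]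
    have : #{m ∈ range N | m < Nat.sqrt n + 1} ≤ #(range (Nat.sqrt n + 1)) :=
      card_le_card fun m hm => by simp at hm ⊢; omega
    rw [card_range] at this
    exact_mod_cast this
  have h5 : (Nat.sqrt n : ℝ) ≤ √(n : ℝ) := Real.nat_sqrt_le_real_sqrt
  have h6 : (∑ m ∈ range N, (m : ℝ) * weight n m) / √(n : ℝ) ≤ √(n : ℝ) := by
    rw [div_le_iff₀ hs0, hss]
    exact sum_mul_weight_le hn N
  have h7 := sum_le_sum key
  rw [sum_add_distrib, ← sum_div] at h7
  unfold moment
  linarith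

/-- `T_j = O(√n^(j+1))`, uniformly in the number of terms. -/
lemma moment_le (j : ℕ) : ∃ C : ℝ, 0 < C ∧ ∀ n N : ℕ, 1 ≤ n →
    moment n N j ≤ C * √(n : ℝ) ^ (j + 1) := by
  induction j using Nat.twoStepInduction with
  | zero => exact ⟨3, by norm_num, fun n N hn => by simpa using moment_zero_le hn N⟩
  | one =>
    refine ⟨4, by norm_num, fun n N hn => ?_⟩
    have hs1 : 1 ≤ √(n : ℝ) := Real.one_le_sqrt.2 (by exact_mod_cast hn)
    have hss : √(n : ℝ) ^ 2 = n := Real.sq_sqrt (by positivity)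
    have h1 := moment_succ n N 0
    have h2 := sum_mul_weight_le hn N
    have h3 := moment_zero_le hn N
    simp only [pow_zero, mul_one, zero_add] at h1
    rw [h1]
    norm_num
    nlinarith
  | more j ih1 ih2 =>
    obtain ⟨C1, hC1, h1⟩ := ih1
    obtain ⟨C2, hC2, h2⟩ := ih2
    refine ⟨(j + 1) * C1 + C2, by positivity, fun n N hn => ?_⟩
    have hs1 : 1 ≤ √(n : ℝ) := Real.one_le_sqrt.2 (by exact_mod_cast hn)
    have hss : √(n : ℝ) ^ 2 = n := Real.sq_sqrt (by positivity)
    have hp : √(n : ℝ) ^ (j + 2) ≤ √(n : ℝ) ^ (j + 3) :=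
      pow_le_pow_right₀ hs1 (by omega)
    calc moment n N (j + 2) ≤ n * ((j + 1) * moment n N j) + moment n N (j + 1) :=
          moment_add_two_le hn N j
      _ ≤ n * ((j + 1) * (C1 * √(n : ℝ) ^ (j + 1))) + C2 * √(n : ℝ) ^ (j + 3) := by
          gcongr
          · exact h1 n N hn
          · exact (h2 n N hn).trans (mul_le_mul_of_nonneg_left hp hC2.le)
      _ = √(n : ℝ) ^ 2 * ((j + 1) * (C1 * √(n : ℝ) ^ (j + 1))) + C2 * √(n : ℝ) ^ (j + 3) := by
          rw [hss]
      _ = _ := by ring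

lemma choose_add_le_pow (m d : ℕ) : (m + d).choose d ≤ (m + 1) ^ d := by
  induction d with
  | zero => simp
  | succ d ih =>
    have h := Nat.add_one_mul_choose_eq (m + d) d
    refine Nat.le_of_mul_le_mul_right (c := d + 1) ?_ (by omega)
    calc (m + (d + 1)).choose (d + 1) * (d + 1) = (m + d + 1) * (m + d).choose d := h.symm
      _ ≤ ((m + 1) * (d + 1)) * (m + 1) ^ d := Nat.mul_le_mul (by nlinarith) ih
      _ = _ := by ring

lemma pow_div_factorial_le_choose (m r : ℕ) :
    ((m : ℝ) + 1) ^ r / r.factorial ≤ (m + r).choose r := by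
  have h := Nat.pow_le_choose (α := ℝ) r (m + r)
  have e : m + r + 1 - r = m + 1 := by omega
  rw [e] at h
  exact_mod_cast h

lemma sum_weight_choose_ge (d : ℕ) {n : ℕ} (hn : 1 ≤ n) :
    3 / 4 / (2 ^ (d + 1) * (d + 1).factorial : ℝ) * √(n : ℝ) ^ (d + 1)
      ≤ ∑ m ∈ range (n + 1), weight n m * ((m + d).choose d : ℝ) := by
  set t := Nat.sqrt n / 2 with ht
  have hn' : (0 : ℝ) < n := by positivity
  have htn : t ≤ n := (Nat.div_le_self _ _).trans (Nat.sqrt_le_self n)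
  have hw : ∀ m ∈ range (t + 1), (3 / 4 : ℝ) ≤ weight n m := by
    intro m hm
    have hm' : 2 * m ≤ Nat.sqrt n := by simp at hm; omega
    have h1 : (2 * m) * (2 * m) ≤ n := (Nat.mul_le_mul hm' hm').trans (Nat.sqrt_le n)
    have h2 : (2 * m : ℝ) * (2 * m) ≤ n := by exact_mod_cast h1
    have h3 : (m : ℝ) ^ 2 / n ≤ 1 / 4 := by
      rw [div_le_iff₀ hn']
      nlinarith
    linarith [weight_ge hn m]
  have hst : √(n : ℝ) / 2 ≤ (t : ℝ) + 1 := by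
    have h2 : (√(n : ℝ)) ≤ Nat.sqrt n + 1 := Real.real_sqrt_le_nat_sqrt_succ
    have h3 : Nat.sqrt n + 1 ≤ 2 * (t + 1) := by omega
    have h4 : (Nat.sqrt n : ℝ) + 1 ≤ 2 * (t + 1) := by exact_mod_cast h3
    linarith
  calc 3 / 4 / (2 ^ (d + 1) * (d + 1).factorial : ℝ) * √(n : ℝ) ^ (d + 1)
      = 3 / 4 * ((√(n : ℝ) / 2) ^ (d + 1) / (d + 1).factorial) := by
        rw [div_pow]
        field_simp
    _ ≤ 3 / 4 * (((t : ℝ) + 1) ^ (d + 1) / (d + 1).factorial) := by gcongr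
    _ ≤ 3 / 4 * ((t + (d + 1)).choose (d + 1) : ℝ) := by
        gcongr
        exact pow_div_factorial_le_choose t (d + 1)
    _ = ∑ m ∈ range (t + 1), 3 / 4 * ((m + d).choose d : ℝ) := by
        rw [← mul_sum, ← Nat.cast_sum, Nat.sum_range_add_choose, add_assoc]
    _ ≤ ∑ m ∈ range (t + 1), weight n m * ((m + d).choose d : ℝ) :=
        sum_le_sum fun m hm => mul_le_mul_of_nonneg_right (hw m hm) (by positivity)
    _ ≤ _ := sum_le_sum_of_subset_of_nonneg (range_subset_range.2 (by omega))
        fun m _ _ => mul_nonneg (weight_nonneg n m) (by positivity)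

lemma sum_weight_choose_le (d n : ℕ) :
    ∑ m ∈ range (n + 1), weight n m * ((m + d).choose d : ℝ) ≤ moment n (n + 1) d := by
  refine sum_le_sum fun m _ => ?_
  rw [mul_comm]
  refine mul_le_mul_of_nonneg_right ?_ (weight_nonneg n m)
  exact_mod_cast choose_add_le_pow m d

lemma Gpoly_one_eq (d n : ℕ) :
    Gpoly (d + 2) n 1 = ∑ m ∈ range (n + 1), weight n m * ((m + d).choose d : ℝ) := by
  unfold Gpoly
  refine sum_congr rfl fun m hm => ?_
  rw [weight_eq (by simp at hm; omega), one_pow, mul_one]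
  rfl

/-- A sequence of exact order `√n^p` grows with exponent `p / 2`. -/
lemma tendsto_log_div_log {f : ℕ → ℝ} {c C : ℝ} (p : ℕ) (hc : 0 < c) (hC : 0 < C)
    (h1 : ∀ n : ℕ, 1 ≤ n → c * √(n : ℝ) ^ p ≤ f n)
    (h2 : ∀ n : ℕ, 1 ≤ n → f n ≤ C * √(n : ℝ) ^ p) :
    Filter.Tendsto (fun n : ℕ => Real.log (f n) / Real.log n) Filter.atTop
      (nhds ((p : ℝ) / 2)) := by
  have hlog : Filter.Tendsto (fun n : ℕ => Real.log n) Filter.atTop Filter.atTop :=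
    Real.tendsto_log_atTop.comp tendsto_natCast_atTop_atTop
  have hl : ∀ a : ℝ, Filter.Tendsto (fun n : ℕ => Real.log a / Real.log n + (p : ℝ) / 2)
      Filter.atTop (nhds ((p : ℝ) / 2)) := fun a => by
    simpa using (hlog.const_div_atTop (Real.log a)).add_const ((p : ℝ) / 2)
  have e : ∀ n : ℕ, 2 ≤ n → ∀ a : ℝ, 0 < a →
      Real.log a / Real.log n + (p : ℝ) / 2 = Real.log (a * √(n : ℝ) ^ p) / Real.log n := by
    intro n hn a ha
    have hn' : (1 : ℝ) < n := by exact_mod_cast hn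
    have hpos := Real.log_pos hn'
    rw [Real.log_mul ha.ne' (by positivity), Real.log_pow, Real.log_sqrt (by positivity)]
    field_simp
  refine tendsto_of_tendsto_of_tendsto_of_le_of_le' (hl c) (hl C) ?_ ?_
  · filter_upwards [Filter.eventually_ge_atTop 2] with n hn
    have hn' : (1 : ℝ) < n := by exact_mod_cast hn
    have hpos := Real.log_pos hn'
    rw [e n hn c hc]
    exact div_le_div_of_nonneg_right
      (Real.log_le_log (by positivity) (h1 n (by omega))) hpos.le
  · filter_upwards [Filter.eventually_ge_atTop 2] with n hn
    have hn' : (1 : ℝ) < n := by exact_mod_cast hn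
    have hpos := Real.log_pos hn'
    rw [e n hn C hC]
    have hf : 0 < f n := lt_of_lt_of_le (by positivity) (h1 n (by omega))
    exact div_le_div_of_nonneg_right (Real.log_le_log hf (h2 n (by omega))) hpos.le

lemma tendsto_log_choose (r : ℕ) :
    Filter.Tendsto (fun n : ℕ => Real.log ((n + r).choose r : ℝ) / Real.log n) Filter.atTop
      (nhds (((2 * r : ℕ) : ℝ) / 2)) := by
  have hs : ∀ n : ℕ, √(n : ℝ) ^ (2 * r) = (n : ℝ) ^ r := fun n => by
    rw [pow_mul, Real.sq_sqrt (by positivity)]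
  refine tendsto_log_div_log (c := 1 / r.factorial) (C := 2 ^ r) (2 * r)
    (by positivity) (by positivity) (fun n _ => ?_) (fun n hn => ?_)
  · rw [hs]
    refine le_trans ?_ (pow_div_factorial_le_choose n r)
    rw [one_div_mul_eq_div]
    gcongr
    linarith
  · rw [hs, ← mul_pow]
    have h : ((n + r).choose r : ℝ) ≤ ((n : ℝ) + 1) ^ r := by
      exact_mod_cast choose_add_le_pow n r
    have hn' : (1 : ℝ) ≤ n := by exact_mod_cast hn
    exact h.trans (by gcongr; linarith)

theorem log_ratio_tendsto_half (k : ℕ) (hk : 2 ≤ k) :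
    Filter.Tendsto
      (fun n : ℕ =>
        Real.log (Gpoly k n 1) / Real.log (Nat.choose (n + k - 1) (k - 1) : ℝ))
      Filter.atTop (nhds (1 / 2)) := by
  obtain ⟨d, rfl⟩ := Nat.exists_eq_add_of_le' hk
  obtain ⟨C, hC, hCb⟩ := moment_le d
  have hG : Filter.Tendsto (fun n : ℕ => Real.log (Gpoly (d + 2) n 1) / Real.log n)
      Filter.atTop (nhds (((d + 1 : ℕ) : ℝ) / 2)) := by
    refine tendsto_log_div_log (c := 3 / 4 / (2 ^ (d + 1) * (d + 1).factorial)) (C := C) (d + 1)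
      (by positivity) hC (fun n hn => ?_) (fun n hn => ?_)
    · rw [Gpoly_one_eq]
      exact sum_weight_choose_ge d hn
    · rw [Gpoly_one_eq]
      exact (sum_weight_choose_le d n).trans (hCb n (n + 1) hn)
  have hB := tendsto_log_choose (d + 1)
  have hd : ((d : ℝ) + 1) ≠ 0 := by positivity
  have hne : ((2 * (d + 1) : ℕ) : ℝ) / 2 ≠ 0 := by positivity
  have hdiv := hG.div hB hne
  have hval : (((d + 1 : ℕ) : ℝ) / 2) / (((2 * (d + 1) : ℕ) : ℝ) / 2) = 1 / 2 := by
    push_cast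
    field_simp
  rw [hval] at hdiv
  refine hdiv.congr' ?_
  filter_upwards [Filter.eventually_ge_atTop 2] with n hn
  have hn' : (1 : ℝ) < n := by exact_mod_cast hn
  exact div_div_div_cancel_right₀ (Real.log_pos hn').ne' _ _
end
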